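/- Weak unique continuation principle for Steklov eigenfunctions (Theorem 3.3, reformulated without Sobolev spaces): Let n ≥ 2 and let Ω ⊆ ℝⁿ be a nonempty, bounded, connected open set with C² boundary, i.e. there exists a C² function φ : ℝⁿ → ℝ with Ω = {x : φ(x) > 0} and ‖∇φ(x)‖ ≥ 1 for every x with φ(x) = 0. Let B ⊆ ℝⁿ be an open set with B ∩ ∂Ω ≠ ∅, where ∂Ω denotes the topological frontier of Ω. Let u : ℝⁿ → ℝ be C² on Ω with Δu = 0 on Ω, and suppose that the zero extension w : ℝⁿ → ℝ, defined by w(x) = u(x) for x ∈ Ω and w(x) = 0 for x ∉ Ω, is C¹ on the open set Ω ∪ B. Then u = 0 everywhere on Ω. -/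

import Mathlib

/-!
Let `V` be the gradient of the zero extension `w`. It is continuous near the boundary point, and
the only issue is whether it is still divergence free across the boundary in the weak sense, where
`V = 0`. Cut off by `χ(‖V‖²)` with `χ` vanishing near `0`: integrating `div V = 0` against
`η χ(‖V‖²)` leaves the error term `∫ η χ'(‖V‖²) ⟨∇‖V‖², V⟩`, which by Young's inequality is at most
`δ ∫ ζ χ'(‖V‖²) ‖∇‖V‖²‖² + δ⁻¹ ∫ ζ χ'(‖V‖²) ‖V‖²` whenever `|η| ≤ ζ`. Since `‖V‖²` is subharmonic
where `V ≠ 0` (Bochner), the first integral is bounded independently of `χ`; the second one tends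
to `0` as the layer carrying `χ'` shrinks to `{0}`, because `t χ'(t)` stays bounded.

Hence `w` is weakly harmonic across the boundary. Pairing `∇w` with a vector field derived from a
radial bump shows that weighted means of `w` over balls do not depend on the radius, so `w` has the
mean value property and is real analytic. It vanishes outside `Ω`, hence identically.
-/

open Set

/-- The Laplacian of `f : ℝⁿ → ℝ`, as the sum of the pure second derivatives
(the trace of the Hessian). -/
noncomputable def laplacian {n : ℕ} (f : EuclideanSpace ℝ (Fin n) → ℝ)
    (x : EuclideanSpace ℝ (Fin n)) : ℝ :=
  ∑ i : Fin n, iteratedFDeriv ℝ 2 f x ![EuclideanSpace.single i 1, EuclideanSpace.single i 1]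

open MeasureTheory Filter Topology Metric
open scoped Laplacian ContDiff Convolution Gradient InnerProductSpace

theorem hasFDerivAt_setIntegral_of_contDiffAt {H E G : Type*}
    [NormedAddCommGroup H] [NormedSpace ℝ H] [NormedAddCommGroup E] [NormedSpace ℝ E]
    [NormedAddCommGroup G] [NormedSpace ℝ G] [MeasurableSpace E] [BorelSpace E]
    {μ : Measure E} [IsFiniteMeasureOnCompacts μ]
    {f : H × E → G} {K : Set E} (hK : IsCompact K) {x₀ : H}
    (hf : ∀ a ∈ K, ContDiffAt ℝ 1 f (x₀, a)) :
    HasFDerivAt (fun x ↦ ∫ a in K, f (x, a) ∂μ)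
      (∫ a in K, fderiv ℝ (fun x ↦ f (x, a)) x₀ ∂μ) x₀ := by
  have hKm := hK.measurableSet
  have partial_eq {x : H} {a : E} (h : ContDiffAt ℝ 1 f (x, a)) :
      HasFDerivAt (fun x ↦ f (x, a)) ((fderiv ℝ f (x, a)).comp (.inl ℝ H E)) x :=
    (h.differentiableAt one_ne_zero).hasFDerivAt.comp x (hasFDerivAt_prodMk_left x a)
  have fderiv_cont {p : H × E} (h : ContDiffAt ℝ 1 f p) :
      ContinuousAt (fun p ↦ (fderiv ℝ f p).comp (.inl ℝ H E)) p :=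
    ((h.fderiv_right (m := 0) le_rfl).continuousAt).clm_comp continuousAt_const
  have hf_near : ∀ᶠ x in 𝓝 x₀, ∀ a ∈ K, ContDiffAt ℝ 1 f (x, a) :=
    hK.eventually_forall_of_forall_eventually fun a ha ↦ (hf a ha).eventually (by simp)
  have hf_cont {x : H} (h : ∀ a ∈ K, ContDiffAt ℝ 1 f (x, a)) :
      ContinuousOn (fun a ↦ f (x, a)) K := fun a ha ↦
    ((h a ha).continuousAt.comp (by fun_prop : ContinuousAt (fun a ↦ (x, a)) a)).continuousWithinAt
  have hf'_cont : ContinuousOn (fun a ↦ (fderiv ℝ f (x₀, a)).comp (.inl ℝ H E)) K := fun a ha ↦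
    ((fderiv_cont (hf a ha)).comp
      (by fun_prop : ContinuousAt (fun a ↦ (x₀, a)) a)).continuousWithinAt
  obtain ⟨C, hC⟩ := hK.exists_bound_of_continuousOn hf'_cont
  have hbound : ∀ᶠ x in 𝓝 x₀, ∀ a ∈ K, ‖(fderiv ℝ f (x, a)).comp (.inl ℝ H E)‖ ≤ C + 1 :=
    hK.eventually_forall_of_forall_eventually fun a ha ↦
      ((fderiv_cont (hf a ha)).norm.eventually_lt continuousAt_const
        ((hC a ha).trans_lt (lt_add_one C))).mono fun _ h ↦ h.le
  rw [setIntegral_congr_fun hKm fun a ha ↦ (partial_eq (hf a ha)).fderiv]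
  refine hasFDerivAt_integral_of_dominated_of_fderiv_le (bound := fun _ ↦ C + 1)
    (F := fun x a ↦ f (x, a)) (F' := fun x a ↦ (fderiv ℝ f (x, a)).comp (.inl ℝ H E))
    (hf_near.and hbound) ?_ ?_ ?_ ?_ ?_ ?_
  · exact hf_near.mono fun x hx ↦ ((hf_cont hx).integrableOn_compact hK).aestronglyMeasurable
  · exact (hf_cont hf).integrableOn_compact hK
  · exact (hf'_cont.integrableOn_compact hK).aestronglyMeasurable
  · exact ae_restrict_of_forall_mem hKm fun a ha x hx ↦ hx.2 a ha
  · exact continuousOn_const.integrableOn_compact hK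
  · exact ae_restrict_of_forall_mem hKm fun a ha x hx ↦ partial_eq (hx.1 a ha)

open scoped Nat in
theorem norm_sub_sum_iteratedFDeriv_le {E F : Type*} [NormedAddCommGroup E] [NormedSpace ℝ E]
    [NormedAddCommGroup F] [NormedSpace ℝ F] [CompleteSpace F] {f : E → F} {x y : E} {n : ℕ}
    {C : ℝ}
    (hf : ∀ t ∈ Icc (0 : ℝ) 1, ContDiffAt ℝ (n + 1) f (x + t • y))
    (hC : ∀ t ∈ Icc (0 : ℝ) 1, ‖iteratedFDeriv ℝ (n + 1) f (x + t • y)‖ ≤ C) :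
    ‖f (x + y) - ∑ k ∈ Finset.range (n + 1), (k ! : ℝ)⁻¹ • iteratedFDeriv ℝ k f x fun _ ↦ y‖ ≤
      (n ! : ℝ)⁻¹ * (C * ‖y‖ ^ (n + 1)) := by
  rw [map_add_eq_sum_add_integral_iteratedFDeriv hf, add_sub_cancel_left, norm_smul,
    Real.norm_of_nonneg (by positivity)]
  gcongr
  have hint : ∀ t ∈ Set.uIoc (0 : ℝ) 1,
      ‖(1 - t) ^ n • iteratedFDeriv ℝ (n + 1) f (x + t • y) fun _ ↦ y‖ ≤ C * ‖y‖ ^ (n + 1) := by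
    intro t ht
    rw [uIoc_of_le zero_le_one] at ht
    have hpow : ‖(1 - t) ^ n‖ ≤ 1 := by
      rw [norm_pow, Real.norm_of_nonneg (by linarith [ht.2])]
      exact pow_le_one₀ (by linarith [ht.2]) (by linarith [ht.1])
    calc ‖(1 - t) ^ n • iteratedFDeriv ℝ (n + 1) f (x + t • y) fun _ ↦ y‖
        ≤ 1 * (‖iteratedFDeriv ℝ (n + 1) f (x + t • y)‖ * ∏ _i : Fin (n + 1), ‖y‖) := by
          rw [norm_smul]
          gcongr
          exact ContinuousMultilinearMap.le_opNorm _ _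
      _ ≤ C * ‖y‖ ^ (n + 1) := by
          rw [one_mul, Finset.prod_const, Finset.card_univ, Fintype.card_fin]
          gcongr
          exact hC t ⟨ht.1.le, ht.2⟩
  simpa using intervalIntegral.norm_integral_le_of_norm_le_const hint

open scoped Nat in
theorem norm_sub_sum_iteratedFDeriv_le_of_le_factorial {E F : Type*} [NormedAddCommGroup E]
    [NormedSpace ℝ E] [NormedAddCommGroup F] [NormedSpace ℝ F] [CompleteSpace F] {f : E → F}
    {x y : E} {n : ℕ} {M A : ℝ}
    (hf : ∀ t ∈ Icc (0 : ℝ) 1, ContDiffAt ℝ (n + 1) f (x + t • y))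
    (hM : ∀ t ∈ Icc (0 : ℝ) 1,
      ‖iteratedFDeriv ℝ (n + 1) f (x + t • y)‖ ≤ M * A ^ (n + 1) * (n + 1)!) :
    ‖f (x + y) - ∑ k ∈ Finset.range (n + 1), (k ! : ℝ)⁻¹ • iteratedFDeriv ℝ k f x fun _ ↦ y‖ ≤
      M * ((n + 1) * (A * ‖y‖) ^ (n + 1)) := by
  refine (norm_sub_sum_iteratedFDeriv_le hf hM).trans_eq ?_
  rw [Nat.factorial_succ]
  push_cast
  field_simp
  rw [mul_pow, mul_assoc]

open scoped Nat in
theorem analyticAt_of_norm_iteratedFDeriv_le {E F : Type*} [NormedAddCommGroup E]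
    [NormedSpace ℝ E] [NormedAddCommGroup F] [NormedSpace ℝ F] [CompleteSpace F] {f : E → F}
    {x : E} {M A : ℝ} (hA : 0 < A) (hf : ∀ᶠ z in 𝓝 x, ContDiffAt ℝ ∞ f z)
    (hM : ∀ᶠ z in 𝓝 x, ∀ n, ‖iteratedFDeriv ℝ n f z‖ ≤ M * A ^ n * n !) :
    AnalyticAt ℝ f x := by
  obtain ⟨ε, hε, hball⟩ := Metric.eventually_nhds_iff_ball.1 (hf.and hM)
  let p : FormalMultilinearSeries ℝ E F := fun n ↦ (n ! : ℝ)⁻¹ • iteratedFDeriv ℝ n f x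
  have hrA : 0 < min ε A⁻¹ := lt_min hε (inv_pos.2 hA)
  have hradius : ENNReal.ofReal (min ε A⁻¹) ≤ p.radius := by
    refine p.le_radius_of_bound M fun n ↦ ?_
    calc ‖p n‖ * (min ε A⁻¹).toNNReal ^ n
        ≤ ((n ! : ℝ)⁻¹ * (M * A ^ n * n !)) * A⁻¹ ^ n := by
          rw [norm_smul, Real.norm_of_nonneg (by positivity), Real.coe_toNNReal _ hrA.le]
          have hnorm := (hball x (mem_ball_self hε)).2 n
          gcongr
          · exact mul_nonneg (by positivity) ((norm_nonneg _).trans hnorm)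
          · exact min_le_right _ _
      _ = M := by
          rw [inv_pow]
          field_simp
  refine HasFPowerSeriesAt.analyticAt ⟨_, hradius, ENNReal.ofReal_pos.2 hrA, fun {y} hy ↦ ?_⟩
  have hsum := p.summable_norm_apply (eball_subset_eball hradius hy)
  rw [eball_ofReal, mem_ball_zero_iff, lt_min_iff, ← one_div, lt_div_iff₀' hA] at hy
  refine (hasSum_iff_tendsto_nat_of_summable_norm hsum).2 ((tendsto_add_atTop_iff_nat 1).1 ?_)
  have hmem (t : ℝ) (ht : t ∈ Icc (0 : ℝ) 1) : x + t • y ∈ ball x ε :=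
    (convex_ball x ε).add_smul_mem (mem_ball_self hε) (by simpa using hy.1) ht
  have hremainder (n : ℕ) :
      ‖∑ k ∈ Finset.range (n + 1), p k (fun _ ↦ y) - f (x + y)‖ ≤
        M * ((n + 1) * (A * ‖y‖) ^ (n + 1)) := by
    rw [norm_sub_rev]
    exact norm_sub_sum_iteratedFDeriv_le_of_le_factorial
      (fun t ht ↦ (hball _ (hmem t ht)).1.of_le (by exact_mod_cast le_top))
      fun t ht ↦ (hball _ (hmem t ht)).2 (n + 1)
  rw [tendsto_iff_norm_sub_tendsto_zero]
  refine squeeze_zero (fun _ ↦ norm_nonneg _) hremainder ?_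
  have hlim := (tendsto_self_mul_const_pow_of_lt_one (by positivity) hy.2).const_mul M
  simpa using (tendsto_add_atTop_iff_nat 1).2 hlim

section IntegrationByParts

theorem integrable_of_continuousOn_of_support_subset {X G : Type*} [TopologicalSpace X]
    [T2Space X] [MeasurableSpace X] [BorelSpace X] [NormedAddCommGroup G] {μ : Measure X}
    [IsFiniteMeasureOnCompacts μ] {f : X → G} {K : Set X} (hK : IsCompact K)
    (hf : ContinuousOn f K) (hfK : Function.support f ⊆ K) : Integrable f μ :=
  (integrableOn_iff_integrable_of_support_subset hfK).1 (hf.integrableOn_compact hK)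

theorem integrable_smul_of_isCompact_inter_tsupport {X G : Type*} [TopologicalSpace X]
    [T2Space X] [MeasurableSpace X] [BorelSpace X] [NormedAddCommGroup G] [NormedSpace ℝ G]
    {μ : Measure X} [IsFiniteMeasureOnCompacts μ] {f : X → ℝ} {g : X → G}
    (hf : ContinuousOn f (tsupport g)) (hg : ContinuousOn g (tsupport f))
    (hfg : IsCompact (tsupport f ∩ tsupport g)) : Integrable (fun x ↦ f x • g x) μ :=
  integrable_of_continuousOn_of_support_subset hfg
    ((hf.mono inter_subset_right).smul (hg.mono inter_subset_left)) fun _ hx ↦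
    ⟨subset_tsupport f (left_ne_zero_of_smul hx), subset_tsupport g (right_ne_zero_of_smul hx)⟩

variable {E G : Type*} [NormedAddCommGroup E] [NormedSpace ℝ E] [MeasurableSpace E]
  [BorelSpace E] [NormedAddCommGroup G] [NormedSpace ℝ G] {μ : Measure E} {f : E → ℝ} {g : E → G}

theorem integrable_smul_fderiv_of_isCompact_inter_tsupport [IsFiniteMeasureOnCompacts μ]
    (hf : ContinuousOn f (tsupport g)) (hg : ∀ x ∈ tsupport f, ContDiffAt ℝ 1 g x)
    (hfg : IsCompact (tsupport f ∩ tsupport g)) (v : E) :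
    Integrable (fun x ↦ f x • fderiv ℝ g x v) μ :=
  integrable_smul_of_isCompact_inter_tsupport (hf.mono (tsupport_fderiv_apply_subset ℝ v))
    (fun x hx ↦ (((hg x hx).fderiv_right (m := 0) le_rfl).continuousAt.clm_apply
      continuousAt_const).continuousWithinAt)
    (hfg.of_isClosed_subset ((isClosed_tsupport f).inter (isClosed_tsupport _))
      (inter_subset_inter_right _ (tsupport_fderiv_apply_subset ℝ v)))

theorem integrable_fderiv_smul_of_isCompact_inter_tsupport [IsFiniteMeasureOnCompacts μ]
    (hf : ∀ x ∈ tsupport g, ContDiffAt ℝ 1 f x) (hg : ContinuousOn g (tsupport f))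
    (hfg : IsCompact (tsupport f ∩ tsupport g)) (v : E) :
    Integrable (fun x ↦ fderiv ℝ f x v • g x) μ :=
  integrable_smul_of_isCompact_inter_tsupport
    (fun x hx ↦ (((hf x hx).fderiv_right (m := 0) le_rfl).continuousAt.clm_apply
      continuousAt_const).continuousWithinAt)
    (hg.mono (tsupport_fderiv_apply_subset ℝ v))
    (hfg.of_isClosed_subset ((isClosed_tsupport _).inter (isClosed_tsupport g))
      (inter_subset_inter_left _ (tsupport_fderiv_apply_subset ℝ v)))

theorem integral_smul_fderiv_eq_neg_of_isCompact_inter_tsupport [FiniteDimensional ℝ E]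
    [μ.IsAddHaarMeasure] (hf : ∀ x ∈ tsupport g, ContDiffAt ℝ 1 f x)
    (hg : ∀ x ∈ tsupport f, ContDiffAt ℝ 1 g x) (hfg : IsCompact (tsupport f ∩ tsupport g))
    (v : E) : ∫ x, f x • fderiv ℝ g x v ∂μ = -∫ x, fderiv ℝ f x v • g x ∂μ := by
  have hf_cont : ContinuousOn f (tsupport g) := fun x hx ↦
    (hf x hx).continuousAt.continuousWithinAt
  have hg_cont : ContinuousOn g (tsupport f) := fun x hx ↦
    (hg x hx).continuousAt.continuousWithinAt
  exact integral_smul_fderiv_eq_neg_fderiv_smul_of_integrable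
    (integrable_fderiv_smul_of_isCompact_inter_tsupport hf hg_cont hfg v)
    (integrable_smul_fderiv_of_isCompact_inter_tsupport hf_cont hg hfg v)
    (integrable_smul_of_isCompact_inter_tsupport hf_cont hg_cont hfg)
    (fun x hx ↦ (hf x hx).differentiableAt one_ne_zero)
    fun x hx ↦ (hg x hx).differentiableAt one_ne_zero

end IntegrationByParts

section RadialBump

variable {E : Type*} [NormedAddCommGroup E]

/-- A smooth bump supported in the closed unit ball. It is an explicit function of `‖y‖ ^ 2`, so
that it has a radial potential. -/
noncomputable def radialBump (y : E) : ℝ := expNegInvGlue (1 - ‖y‖ ^ 2)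

/-- A potential of the radial bump: its gradient at `y` is `-radialBump y • y`. -/
noncomputable def radialBumpPotential (y : E) : ℝ :=
  (∫ t in (‖y‖ ^ 2)..1, expNegInvGlue (1 - t)) / 2

theorem radialBump_neg (y : E) : radialBump (-y) = radialBump y := by simp [radialBump]

theorem support_radialBump_subset : Function.support (radialBump : E → ℝ) ⊆ closedBall 0 1 := by
  intro y hy
  contrapose! hy
  rw [mem_closedBall_zero_iff, not_le] at hy
  simp only [Function.mem_support, not_not]
  exact expNegInvGlue.zero_of_nonpos (by nlinarith)

theorem support_radialBumpPotential_subset :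
    Function.support (radialBumpPotential : E → ℝ) ⊆ closedBall 0 1 := by
  intro y hy
  contrapose! hy
  rw [mem_closedBall_zero_iff, not_le] at hy
  have hzero : ∀ t ∈ uIcc (‖y‖ ^ 2) 1, expNegInvGlue (1 - t) = 0 := fun t ht ↦ by
    rw [uIcc_of_ge (by nlinarith)] at ht
    exact expNegInvGlue.zero_of_nonpos (by linarith [ht.1])
  simp [radialBumpPotential, intervalIntegral.integral_congr hzero]

variable [InnerProductSpace ℝ E]

theorem contDiff_radialBump : ContDiff ℝ ∞ (radialBump : E → ℝ) :=
  (expNegInvGlue.contDiff (n := ⊤)).comp (contDiff_const.sub (contDiff_norm_sq ℝ))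

theorem hasFDerivAt_radialBumpPotential (y : E) :
    HasFDerivAt radialBumpPotential (-radialBump y • innerSL ℝ y) y := by
  have hc : Continuous fun t : ℝ ↦ expNegInvGlue (1 - t) :=
    (expNegInvGlue.contDiff (n := 0)).continuous.comp (by fun_prop)
  have hintegral : HasDerivAt (fun s : ℝ ↦ ∫ t in s..1, expNegInvGlue (1 - t))
      (-expNegInvGlue (1 - ‖y‖ ^ 2)) (‖y‖ ^ 2) :=
    intervalIntegral.integral_hasDerivAt_left (hc.intervalIntegrable _ _)
      (hc.stronglyMeasurableAtFilter _ _) hc.continuousAt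
  refine ((hintegral.comp_hasFDerivAt y (hasStrictFDerivAt_norm_sq y).hasFDerivAt).mul_const
    (2⁻¹ : ℝ)).congr_fderiv ?_
  ext v
  simp only [radialBump, smul_apply, smul_eq_mul, nsmul_eq_mul]
  ring

theorem contDiff_radialBumpPotential : ContDiff ℝ 1 (radialBumpPotential : E → ℝ) := by
  have hfderiv : fderiv ℝ (radialBumpPotential : E → ℝ) = fun y ↦ -radialBump y • innerSL ℝ y :=
    funext fun y ↦ (hasFDerivAt_radialBumpPotential y).fderiv
  rw [contDiff_one_iff_fderiv, hfderiv]
  have := (contDiff_radialBump (E := E)).continuous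
  exact ⟨fun y ↦ (hasFDerivAt_radialBumpPotential y).differentiableAt, by fun_prop⟩

variable [FiniteDimensional ℝ E]

theorem hasCompactSupport_radialBump : HasCompactSupport (radialBump : E → ℝ) :=
  .of_support_subset_isCompact (isCompact_closedBall 0 1) support_radialBump_subset

variable [MeasurableSpace E] [BorelSpace E]

theorem integral_radialBump_pos : 0 < ∫ y : E, radialBump y :=
  contDiff_radialBump.continuous.integral_pos_of_hasCompactSupport_nonneg_nonzero
    hasCompactSupport_radialBump (fun _ ↦ expNegInvGlue.nonneg _) (x := 0)
    (expNegInvGlue.pos_of_pos (by simp)).ne'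

theorem setIntegral_radialBump_smul {F : Type*} [NormedAddCommGroup F] [NormedSpace ℝ F]
    (g : E → F) : ∫ y in closedBall 0 1, radialBump y • g y = ∫ y, radialBump y • g y :=
  setIntegral_eq_integral_of_forall_compl_eq_zero fun y hy ↦ by
    rw [Function.notMem_support.1 (mt (@support_radialBump_subset E _ y) hy), zero_smul]

end RadialBump

section MeanValueProperty

variable {E F : Type*} [NormedAddCommGroup E] [InnerProductSpace ℝ E] [FiniteDimensional ℝ E]
  [NormedAddCommGroup F] [NormedSpace ℝ F] {f : E → F} {U : Set E} {x : E} {r : ℝ}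

theorem add_smul_mem_closedBall {E : Type*} [NormedAddCommGroup E] [NormedSpace ℝ E]
    (x : E) {y : E} {r : ℝ} (hr : 0 ≤ r) (hy : y ∈ closedBall (0 : E) 1) :
    x + r • y ∈ closedBall x r := by
  rw [mem_closedBall_zero_iff] at hy
  rw [mem_closedBall_iff_norm, add_sub_cancel_left, norm_smul, Real.norm_of_nonneg hr]
  exact mul_le_of_le_one_right hr hy

theorem eventually_closedBall_subset_of_isOpen (hU : IsOpen U) (hxr : closedBall x r ⊆ U) :
    ∀ᶠ z in 𝓝 x, closedBall z r ⊆ U := by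
  have hmem : ∀ᶠ z in 𝓝 x, ∀ y ∈ closedBall (0 : E) r, z + y ∈ U :=
    (isCompact_closedBall _ _).eventually_forall_of_forall_eventually fun y hy ↦
      (continuous_add.tendsto (x, y)).eventually (hU.mem_nhds (hxr (by simpa using hy)))
  filter_upwards [hmem] with z hz v hv
  simpa using hz (v - z) (by simpa [dist_eq_norm] using hv)

variable [MeasurableSpace E] [BorelSpace E]

/-- `f` agrees at the centre of each closed ball inside `U` with its average over that ball,
weighted by the radial bump. -/
def HasMeanValueProperty (f : E → F) (U : Set E) : Prop :=
  ∀ ⦃x : E⦄ ⦃r : ℝ⦄, 0 < r → closedBall x r ⊆ U →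
    ∫ y, radialBump y • f (x + r • y) = (∫ y : E, radialBump y) • f x

theorem hasFDerivAt_integral_radialBump_smul_comp {H : Type*} [NormedAddCommGroup H]
    [NormedSpace ℝ H] {A : H × E → E} (hA : ContDiff ℝ 1 A) {q : H}
    (hf : ∀ y ∈ closedBall (0 : E) 1, ContDiffAt ℝ 1 f (A (q, y))) :
    HasFDerivAt (fun q ↦ ∫ y, radialBump y • f (A (q, y)))
      (∫ y, radialBump y • fderiv ℝ (fun q ↦ f (A (q, y))) q) q := by
  have hfA : ∀ y ∈ closedBall (0 : E) 1, ContDiffAt ℝ 1 (fun p ↦ f (A p)) (q, y) := fun y hy ↦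
    (hf y hy).comp (q, y) hA.contDiffAt
  have hcont : ∀ y ∈ closedBall (0 : E) 1,
      ContDiffAt ℝ 1 (fun p : H × E ↦ radialBump p.2 • f (A p)) (q, y) := fun y hy ↦
    ((contDiff_radialBump.of_le (by simp)).comp contDiff_snd).contDiffAt.smul (hfA y hy)
  have hfderiv : ∀ y ∈ closedBall (0 : E) 1,
      fderiv ℝ (fun q ↦ radialBump y • f (A (q, y))) q =
        radialBump y • fderiv ℝ (fun q ↦ f (A (q, y))) q := fun y hy ↦
    fderiv_fun_const_smul
      (((hfA y hy).comp₂ contDiffAt_id contDiffAt_const).differentiableAt one_ne_zero) _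
  have := hasFDerivAt_setIntegral_of_contDiffAt (μ := volume)
    (isCompact_closedBall (0 : E) 1) hcont
  rw [setIntegral_congr_fun measurableSet_closedBall hfderiv] at this
  simpa only [setIntegral_radialBump_smul] using this

namespace HasMeanValueProperty

protected theorem fderiv (h : HasMeanValueProperty f U) (hU : IsOpen U) (hf : ContDiffOn ℝ 1 f U) :
    HasMeanValueProperty (fderiv ℝ f) U := by
  intro x r hr hxr
  have hfx : HasFDerivAt f (fderiv ℝ f x) x :=
    ((hf.contDiffAt (hU.mem_nhds (hxr (mem_closedBall_self hr.le)))).differentiableAt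
      one_ne_zero).hasFDerivAt
  have hintegral := hasFDerivAt_integral_radialBump_smul_comp (f := f)
    (A := fun p : E × E ↦ p.1 + r • p.2) (by fun_prop) fun y hy ↦
      hf.contDiffAt (hU.mem_nhds (hxr (add_smul_mem_closedBall x hr.le hy)))
  simp only [fderiv_comp_add_right] at hintegral
  refine hintegral.unique
    ((hfx.const_smul (∫ y : E, radialBump y)).congr_of_eventuallyEq ?_)
  filter_upwards [eventually_closedBall_subset_of_isOpen hU hxr] with z hz using h hr hz

theorem continuousLinearEquiv_comp {G : Type*} [NormedAddCommGroup G] [NormedSpace ℝ G]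
    (h : HasMeanValueProperty f U) (L : F ≃L[ℝ] G) : HasMeanValueProperty (L ∘ f) U := by
  intro x r hr hxr
  simp only [Function.comp_apply, ← map_smul, ← h hr hxr]
  exact L.integral_comp_comm _

theorem eq_convolution (h : HasMeanValueProperty f U) (hr : 0 < r) (hxr : closedBall x r ⊆ U)
    {g : E → F} (hg : EqOn g f (closedBall x r)) :
    f x = ((∫ y : E, radialBump y)⁻¹ * (r ^ Module.finrank ℝ E)⁻¹) •
      ((fun v : E ↦ radialBump (r⁻¹ • v)) ⋆[.lsmul ℝ ℝ] g) x := by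
  have hconv : ((fun v : E ↦ radialBump (r⁻¹ • v)) ⋆[.lsmul ℝ ℝ] g) x =
      ∫ v, radialBump (r⁻¹ • v) • g (x + v) := by
    rw [convolution_def, ← integral_neg_eq_self]
    simp [radialBump_neg]
  have hscale : ∫ y, radialBump y • g (x + r • y) =
      (r ^ Module.finrank ℝ E)⁻¹ • ∫ v, radialBump (r⁻¹ • v) • g (x + v) := by
    rw [← Measure.integral_comp_smul_of_nonneg _ _ _ (hR := hr.le)]
    simp only [inv_smul_smul₀ hr.ne']
  have hgf : ∫ y, radialBump y • g (x + r • y) = ∫ y, radialBump y • f (x + r • y) := by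
    rw [← setIntegral_radialBump_smul, ← setIntegral_radialBump_smul]
    exact setIntegral_congr_fun measurableSet_closedBall fun y hy ↦ by
      simp only [hg (add_smul_mem_closedBall x hr.le hy)]
  rw [hconv, mul_smul, ← hscale, hgf, h hr hxr, inv_smul_smul₀ integral_radialBump_pos.ne']

protected theorem contDiffOn [CompleteSpace F] (h : HasMeanValueProperty f U) (hU : IsOpen U)
    (hf : ContinuousOn f U) : ContDiffOn ℝ ∞ f U := by
  intro x hx
  obtain ⟨d, hd, hdU⟩ := nhds_basis_closedBall.mem_iff.1 (hU.mem_nhds hx)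
  have hlocal (z : E) (hz : z ∈ ball x (d / 2)) : closedBall z (d / 2) ⊆ closedBall x d :=
    closedBall_subset_closedBall' (by linarith [mem_ball.1 hz])
  have hintegrable : LocallyIntegrable ((closedBall x d).indicator f) :=
    (((hf.mono hdU).integrableOn_compact (isCompact_closedBall x d)).integrable_indicator
      measurableSet_closedBall).locallyIntegrable
  have hcompact : HasCompactSupport fun v : E ↦ radialBump ((d / 2)⁻¹ • v) :=
    hasCompactSupport_radialBump.comp_smul (by positivity)
  have hsmooth := (hcompact.contDiff_convolution_left (.lsmul ℝ ℝ : ℝ →L[ℝ] F →L[ℝ] F) (n := ⊤)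
    (contDiff_radialBump.comp (contDiff_const_smul _)) hintegrable).const_smul
      ((∫ y : E, radialBump y)⁻¹ * ((d / 2) ^ Module.finrank ℝ E)⁻¹)
  refine (hsmooth.contDiffAt.congr_of_eventuallyEq ?_).contDiffWithinAt
  filter_upwards [ball_mem_nhds x (half_pos hd)] with z hz
  exact h.eq_convolution (half_pos hd) ((hlocal z hz).trans hdU)
    ((eqOn_indicator).mono (hlocal z hz))

protected theorem iteratedFDeriv (h : HasMeanValueProperty f U) (hU : IsOpen U)
    (hf : ContDiffOn ℝ ∞ f U) (k : ℕ) : HasMeanValueProperty (iteratedFDeriv ℝ k f) U := by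
  induction k with
  | zero =>
    rw [iteratedFDeriv_zero_eq_comp]
    exact h.continuousLinearEquiv_comp
      (continuousMultilinearCurryFin0 ℝ E F).symm.toContinuousLinearEquiv
  | succ k ih =>
    rw [iteratedFDeriv_succ_eq_comp_left]
    refine (ih.fderiv hU fun x hx ↦ ?_).continuousLinearEquiv_comp
      (continuousMultilinearCurryLeftEquiv ℝ
        (fun _ : Fin (k + 1) ↦ E) F).symm.toContinuousLinearEquiv
    exact ((hf.contDiffAt (hU.mem_nhds hx)).iteratedFDeriv_right
      (by exact_mod_cast le_top)).contDiffWithinAt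

end HasMeanValueProperty

theorem integrable_norm_fderiv_radialBump : Integrable fun y : E ↦ ‖fderiv ℝ radialBump y‖ := by
  have hcontinuous : Continuous (fderiv ℝ (radialBump : E → ℝ)) :=
    contDiff_radialBump.continuous_fderiv (by simp)
  have hcompact : HasCompactSupport (fderiv ℝ (radialBump : E → ℝ)) :=
    hasCompactSupport_radialBump.fderiv ℝ
  exact hcontinuous.norm.integrable_of_hasCompactSupport hcompact.norm

/-- The constant `C` of the interior gradient estimate `‖∇f(x)‖ ≤ C / r * sup ‖f‖` over the ball
of radius `r` around `x`, for functions with the mean value property. -/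
noncomputable def interiorGradientConst (E : Type*) [NormedAddCommGroup E]
    [InnerProductSpace ℝ E] [FiniteDimensional ℝ E] [MeasurableSpace E] [BorelSpace E] : ℝ :=
  (∫ y : E, ‖fderiv ℝ radialBump y‖) / ∫ y : E, radialBump y

theorem interiorGradientConst_nonneg : 0 ≤ interiorGradientConst E :=
  div_nonneg (integral_nonneg fun _ ↦ norm_nonneg _) integral_radialBump_pos.le

namespace HasMeanValueProperty

theorem smul_fderiv_apply (h : HasMeanValueProperty f U) (hU : IsOpen U)
    (hf : ContDiffOn ℝ 1 f U) (hr : 0 < r) (hxr : closedBall x r ⊆ U) (e : E) :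
    (r * ∫ y : E, radialBump y) • fderiv ℝ f x e =
      -∫ y, fderiv ℝ radialBump y e • f (x + r • y) := by
  have hf_at : ∀ y ∈ tsupport (radialBump : E → ℝ), ContDiffAt ℝ 1 f (x + r • y) := fun y hy ↦
    hf.contDiffAt (hU.mem_nhds (hxr (add_smul_mem_closedBall x hr.le
      (closure_minimal support_radialBump_subset isClosed_closedBall hy))))
  have hfderiv (y : E) :
      fderiv ℝ (fun y ↦ f (x + r • y)) y = r • fderiv ℝ f (x + r • y) := by
    rw [fderiv_comp_smul (f := fun z ↦ f (x + z)), fderiv_comp_add_left]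
  have hintegrable : Integrable fun y ↦ radialBump y • fderiv ℝ f (x + r • y) :=
    integrable_smul_of_isCompact_inter_tsupport contDiff_radialBump.continuous.continuousOn
      (fun y hy ↦ (((hf_at y hy).fderiv_right (m := 0) le_rfl).continuousAt.comp
        (f := fun y ↦ x + r • y) (by fun_prop)).continuousWithinAt)
      (hasCompactSupport_radialBump.isCompact.inter_right (isClosed_tsupport _))
  have hmean := congr($(h.fderiv hU hf hr hxr) e)
  rw [ContinuousLinearMap.integral_apply hintegrable] at hmean
  calc (r * ∫ y : E, radialBump y) • fderiv ℝ f x e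
      = r • ∫ y, radialBump y • fderiv ℝ f (x + r • y) e := by
        rw [mul_smul]
        exact congr(r • $hmean.symm)
    _ = ∫ y, radialBump y • fderiv ℝ (fun y ↦ f (x + r • y)) y e := by
        rw [← integral_smul]
        simp only [hfderiv, smul_apply, smul_comm r]
    _ = -∫ y, fderiv ℝ radialBump y e • f (x + r • y) :=
        integral_smul_fderiv_eq_neg_of_isCompact_inter_tsupport
          (fun _ _ ↦ (contDiff_radialBump.of_le (by simp)).contDiffAt)
          (fun y hy ↦ (hf_at y hy).comp y (by fun_prop))
          (hasCompactSupport_radialBump.isCompact.inter_right (isClosed_tsupport _)) e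

theorem norm_fderiv_le (h : HasMeanValueProperty f U) (hU : IsOpen U)
    (hf : ContDiffOn ℝ 1 f U) (hr : 0 < r) (hxr : closedBall x r ⊆ U) {M : ℝ}
    (hM : ∀ z ∈ closedBall x r, ‖f z‖ ≤ M) :
    ‖fderiv ℝ f x‖ ≤ interiorGradientConst E / r * M := by
  have hM₀ : 0 ≤ M := (norm_nonneg _).trans (hM x (mem_closedBall_self hr.le))
  have hc := integral_radialBump_pos (E := E)
  refine ContinuousLinearMap.opNorm_le_bound _ (mul_nonneg
    (div_nonneg interiorGradientConst_nonneg hr.le) hM₀) fun e ↦ ?_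
  have hbound (y : E) : ‖fderiv ℝ radialBump y e • f (x + r • y)‖ ≤
      ‖fderiv ℝ (radialBump : E → ℝ) y‖ * (‖e‖ * M) := by
    rw [norm_smul, ← mul_assoc]
    by_cases hy : y ∈ closedBall (0 : E) 1
    · gcongr
      · exact ContinuousLinearMap.le_opNorm _ _
      · exact hM _ (add_smul_mem_closedBall x hr.le hy)
    · have hzero : fderiv ℝ radialBump y = 0 := Function.notMem_support.1 fun hy' ↦
        hy (closure_minimal support_radialBump_subset isClosed_closedBall
          (support_fderiv_subset ℝ hy'))
      simp [hzero]
  have hnorm := norm_integral_le_of_norm_le (integrable_norm_fderiv_radialBump.mul_const _)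
    (ae_of_all _ hbound)
  rw [← norm_neg, ← h.smul_fderiv_apply hU hf hr hxr e, norm_smul,
    Real.norm_of_nonneg (mul_pos hr hc).le, integral_mul_const] at hnorm
  calc ‖fderiv ℝ f x e‖
      ≤ (∫ y : E, ‖fderiv ℝ (radialBump : E → ℝ) y‖) * (‖e‖ * M) / (r * ∫ y : E, radialBump y) :=
        (le_div_iff₀' (mul_pos hr hc)).2 hnorm
    _ = interiorGradientConst E / r * M * ‖e‖ := by
        rw [interiorGradientConst]
        ring

theorem norm_iteratedFDeriv_le (h : HasMeanValueProperty f U) (hU : IsOpen U)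
    (hf : ContDiffOn ℝ ∞ f U) (hr : 0 < r) {M : ℝ} {k : ℕ} {z : E}
    (hz : closedBall z (k * r) ⊆ U) (hM : ∀ y ∈ closedBall z (k * r), ‖f y‖ ≤ M) :
    ‖iteratedFDeriv ℝ k f z‖ ≤ (interiorGradientConst E / r) ^ k * M := by
  induction k generalizing z with
  | zero => simpa using hM z (by simp)
  | succ k ih =>
    have hsub {y : E} (hy : y ∈ closedBall z r) :
        closedBall y (k * r) ⊆ closedBall z ((k + 1 : ℕ) * r) :=
      closedBall_subset_closedBall' (by push_cast; linarith [mem_closedBall.1 hy])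
    have hself {y : E} : y ∈ closedBall y (k * r) := mem_closedBall_self (by positivity)
    have hrU : closedBall z r ⊆ U := fun y hy ↦ hz (hsub hy hself)
    rw [← norm_fderiv_iteratedFDeriv, pow_succ', mul_assoc]
    exact (h.iteratedFDeriv hU hf k).norm_fderiv_le hU (fun y hy ↦
      ((hf.contDiffAt (hU.mem_nhds hy)).iteratedFDeriv_right (m := 1)
        (by exact_mod_cast le_top)).contDiffWithinAt) hr hrU fun y hy ↦
      ih ((hsub hy).trans hz) fun v hv ↦ hM v (hsub hy hv)

open scoped Nat in
theorem norm_iteratedFDeriv_le_factorial (h : HasMeanValueProperty f U) (hU : IsOpen U)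
    (hf : ContDiffOn ℝ ∞ f U) (hr : 0 < r) (hxr : closedBall x r ⊆ U) {M : ℝ}
    (hM : ∀ z ∈ closedBall x r, ‖f z‖ ≤ M) (k : ℕ) :
    ‖iteratedFDeriv ℝ k f x‖ ≤
      M * (interiorGradientConst E * Real.exp 1 / r) ^ k * k ! := by
  have hM₀ : 0 ≤ M := (norm_nonneg _).trans (hM x (mem_closedBall_self hr.le))
  have hC := interiorGradientConst_nonneg (E := E)
  obtain rfl | hk := Nat.eq_zero_or_pos k
  · simpa using hM x (mem_closedBall_self hr.le)
  have hradius : (k : ℝ) * (r / k) = r := by field_simp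
  have hpow : (k : ℝ) ^ k ≤ Real.exp 1 ^ k * k ! := by
    rw [← div_le_iff₀ (by positivity), ← Real.exp_nat_mul, mul_one]
    exact Real.pow_div_factorial_le_exp k (by positivity) k
  calc ‖iteratedFDeriv ℝ k f x‖
      ≤ (interiorGradientConst E / (r / k)) ^ k * M :=
        h.norm_iteratedFDeriv_le hU hf (by positivity) (by rwa [hradius]) (by rwa [hradius])
    _ = M * (interiorGradientConst E / r) ^ k * k ^ k := by
        rw [div_div_eq_mul_div, mul_div_right_comm, mul_pow]
        ring
    _ ≤ M * (interiorGradientConst E / r) ^ k * (Real.exp 1 ^ k * k !) := by gcongr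
    _ = M * (interiorGradientConst E * Real.exp 1 / r) ^ k * k ! := by
        rw [mul_div_right_comm, mul_pow]
        ring

protected theorem analyticOnNhd [CompleteSpace F] (h : HasMeanValueProperty f U) (hU : IsOpen U)
    (hf : ContinuousOn f U) : AnalyticOnNhd ℝ f U := by
  intro x hx
  have hsmooth := h.contDiffOn hU hf
  obtain ⟨d, hd, hdU⟩ := nhds_basis_closedBall.mem_iff.1 (hU.mem_nhds hx)
  obtain ⟨M, hM⟩ := (isCompact_closedBall x d).exists_bound_of_continuousOn (hf.mono hdU)
  have hM₀ : 0 ≤ M := (norm_nonneg _).trans (hM x (mem_closedBall_self hd.le))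
  have hC := interiorGradientConst_nonneg (E := E)
  have hlocal (z : E) (hz : z ∈ ball x (d / 2)) : closedBall z (d / 2) ⊆ closedBall x d :=
    closedBall_subset_closedBall' (by linarith [mem_ball.1 hz])
  refine analyticAt_of_norm_iteratedFDeriv_le (M := M)
    (A := interiorGradientConst E * Real.exp 1 / (d / 2) + 1) ?_ ?_ ?_
  · positivity
  · filter_upwards [hU.mem_nhds hx] with z hz using hsmooth.contDiffAt (hU.mem_nhds hz)
  · filter_upwards [ball_mem_nhds x (half_pos hd)] with z hz k
    refine (h.norm_iteratedFDeriv_le_factorial hU hsmooth (half_pos hd) ((hlocal z hz).trans hdU)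
      (fun y hy ↦ hM y (hlocal z hz hy)) k).trans ?_
    gcongr
    exact le_add_of_nonneg_right zero_le_one

end HasMeanValueProperty

end MeanValueProperty

section Divergence

variable {E : Type*} [NormedAddCommGroup E] [InnerProductSpace ℝ E]
  {η w : E → ℝ} {V : E → E} {U : Set E} {x : E} {r : ℝ}

/-- The divergence of a vector field, encoded as the trace of its derivative. -/
noncomputable def divergence (V : E → E) (x : E) : ℝ := LinearMap.trace ℝ E (fderiv ℝ V x)

theorem divergence_eq_sum_inner {ι : Type*} [Fintype ι] (b : OrthonormalBasis ι ℝ E)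
    (V : E → E) (x : E) : divergence V x = ∑ i, ⟪b i, fderiv ℝ V x (b i)⟫_ℝ :=
  LinearMap.trace_eq_sum_inner _ b

theorem fderiv_inner_left_apply (hV : DifferentiableAt ℝ V x) (e v : E) :
    fderiv ℝ (fun x ↦ ⟪e, V x⟫_ℝ) x v = ⟪e, fderiv ℝ V x v⟫_ℝ := by
  simp [fderiv_inner_apply ℝ (differentiableAt_const e) hV]

variable [FiniteDimensional ℝ E]

theorem contDiffAt_gradient {n m : ℕ∞} (hw : ContDiffAt ℝ n w x) (hmn : m + 1 ≤ n) :
    ContDiffAt ℝ m (∇ w) x :=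
  (InnerProductSpace.toDual ℝ E).symm.contDiff.contDiffAt.comp x
    (hw.fderiv_right (by exact_mod_cast hmn))

theorem inner_fderiv_gradient_apply (hw : ContDiffAt ℝ 2 w x) (h k : E) :
    ⟪h, fderiv ℝ (∇ w) x k⟫_ℝ = fderiv ℝ (fderiv ℝ w) x k h := by
  have hgradient : DifferentiableAt ℝ (∇ w) x :=
    (contDiffAt_gradient (n := 2) (m := 1) hw le_rfl).differentiableAt one_ne_zero
  have hfderiv : DifferentiableAt ℝ (fderiv ℝ w) x :=
    (hw.fderiv_right (m := 1) le_rfl).differentiableAt one_ne_zero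
  rw [← fderiv_inner_left_apply hgradient]
  simp [fderiv_clm_apply hfderiv (differentiableAt_const _)]

theorem divergence_gradient (hw : ContDiffAt ℝ 2 w x) :
    divergence (∇ w) x = Δ w x := by
  rw [divergence_eq_sum_inner (stdOrthonormalBasis ℝ E),
    InnerProductSpace.laplacian_eq_iteratedFDeriv_stdOrthonormalBasis]
  simp [iteratedFDeriv_two_apply, inner_fderiv_gradient_apply hw]

variable [MeasurableSpace E] [BorelSpace E]

theorem integral_fderiv_apply_eq_neg_integral_mul_divergence
    (hη : ∀ x ∈ tsupport V, ContDiffAt ℝ 1 η x) (hV : ∀ x ∈ tsupport η, ContDiffAt ℝ 1 V x)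
    (hηV : IsCompact (tsupport η ∩ tsupport V)) :
    ∫ x, fderiv ℝ η x (V x) = -∫ x, η x * divergence V x := by
  let b := stdOrthonormalBasis ℝ E
  let V' (i) (x : E) : ℝ := ⟪b i, V x⟫_ℝ
  have hV' (i) : ∀ x ∈ tsupport η, ContDiffAt ℝ 1 (V' i) x :=
    fun x hx ↦ contDiffAt_const.inner ℝ (hV x hx)
  have hsupport (i) : tsupport (V' i) ⊆ tsupport V :=
    closure_mono fun x hx ↦ ne_of_apply_ne (inner ℝ (b i)) (by simpa [V'] using hx)
  have hηV' (i) : IsCompact (tsupport η ∩ tsupport (V' i)) :=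
    hηV.of_isClosed_subset ((isClosed_tsupport η).inter (isClosed_tsupport _))
      (inter_subset_inter_right _ (hsupport i))
  have hη_apply (x : E) : fderiv ℝ η x (V x) = ∑ i, fderiv ℝ η x (b i) • V' i x := by
    conv_lhs => rw [← b.sum_repr' (V x)]
    simp [V', mul_comm]
  have hdiv (x : E) : η x * divergence V x = ∑ i, η x • fderiv ℝ (V' i) x (b i) := by
    by_cases hx : x ∈ tsupport η
    · rw [divergence_eq_sum_inner b, Finset.mul_sum]
      simp only [V', fderiv_inner_left_apply ((hV x hx).differentiableAt one_ne_zero),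
        smul_eq_mul]
    · simp [image_eq_zero_of_notMem_tsupport hx]
  simp only [hη_apply, hdiv]
  rw [integral_finsetSum, integral_finsetSum, ← Finset.sum_neg_distrib]
  · refine Finset.sum_congr rfl fun i _ ↦ ?_
    rw [integral_smul_fderiv_eq_neg_of_isCompact_inter_tsupport (fun x hx ↦ hη x (hsupport i hx))
      (hV' i) (hηV' i), neg_neg]
  · exact fun i _ ↦ integrable_smul_fderiv_of_isCompact_inter_tsupport
      (fun x hx ↦ (hη x (hsupport i hx)).continuousAt.continuousWithinAt) (hV' i) (hηV' i) _
  · exact fun i _ ↦ integrable_fderiv_smul_of_isCompact_inter_tsupport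
      (fun x hx ↦ hη x (hsupport i hx))
      (fun x hx ↦ (hV' i x hx).continuousAt.continuousWithinAt) (hηV' i) _

/-- `V` is divergence free on `U` in the sense of distributions. -/
def IsWeaklyDivergenceFree (V : E → E) (U : Set E) : Prop :=
  ∀ ⦃η : E → ℝ⦄, ContDiff ℝ 1 η → HasCompactSupport η → tsupport η ⊆ U →
    ∫ x, fderiv ℝ η x (V x) = 0

theorem isWeaklyDivergenceFree_of_divergence_eq_zero (hV : ∀ x ∈ U, ContDiffAt ℝ 1 V x)
    (hdiv : ∀ x ∈ U, divergence V x = 0) : IsWeaklyDivergenceFree V U := by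
  intro η hη hηc hηU
  rw [integral_fderiv_apply_eq_neg_integral_mul_divergence (fun _ _ ↦ hη.contDiffAt)
    (fun x hx ↦ hV x (hηU hx)) (hηc.isCompact.inter_right (isClosed_tsupport V)), neg_eq_zero]
  refine integral_eq_zero_of_ae (ae_of_all _ fun x ↦ ?_)
  by_cases hx : x ∈ tsupport η
  · simp [hdiv x (hηU hx)]
  · simp [image_eq_zero_of_notMem_tsupport hx]

theorem isWeaklyDivergenceFree_gradient_of_harmonicOnNhd
    (hw : InnerProductSpace.HarmonicOnNhd w U) : IsWeaklyDivergenceFree (∇ w) U :=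
  isWeaklyDivergenceFree_of_divergence_eq_zero
    (fun x hx ↦ contDiffAt_gradient (n := 2) (m := 1) (hw x hx).1 le_rfl)
    fun x hx ↦ (divergence_gradient (hw x hx).1).trans (hw x hx).2.self_of_nhds

theorem integral_radialBump_mul_fderiv_eq_zero (h : IsWeaklyDivergenceFree (∇ w) U) (hr : 0 < r)
    (hxr : closedBall x r ⊆ U) : ∫ y, radialBump y * fderiv ℝ w (x + r • y) y = 0 := by
  let η : E → ℝ := fun z ↦ radialBumpPotential (r⁻¹ • (z - x))
  have hη : ContDiff ℝ 1 η := contDiff_radialBumpPotential.comp (by fun_prop)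
  have hsupport : tsupport η ⊆ closedBall x r := by
    refine closure_minimal (fun z hz ↦ ?_) isClosed_closedBall
    have hz' := support_radialBumpPotential_subset (E := E) hz
    rw [mem_closedBall_zero_iff, norm_smul, norm_inv, Real.norm_of_nonneg hr.le,
      inv_mul_le_one₀ hr] at hz'
    rwa [mem_closedBall_iff_norm]
  have hfderiv (z : E) : fderiv ℝ η z (∇ w z) =
      -r⁻¹ * (radialBump (r⁻¹ • (z - x)) * fderiv ℝ w z (r⁻¹ • (z - x))) := by
    have hscale : HasFDerivAt (fun z ↦ r⁻¹ • (z - x)) (r⁻¹ • ContinuousLinearMap.id ℝ E) z :=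
      ((hasFDerivAt_id z).sub_const x).const_smul r⁻¹
    have hη' : HasFDerivAt η _ z := (hasFDerivAt_radialBumpPotential _).comp z hscale
    rw [hη'.fderiv]
    simp
  have htest := h hη (.of_support_subset_isCompact (isCompact_closedBall x r)
    ((subset_tsupport η).trans hsupport)) (hsupport.trans hxr)
  simp only [hfderiv, integral_const_mul, mul_eq_zero, neg_eq_zero, inv_eq_zero, hr.ne',
    false_or] at htest
  let g : E → ℝ := fun z ↦ radialBump (r⁻¹ • (z - x)) * fderiv ℝ w z (r⁻¹ • (z - x))
  calc ∫ y, radialBump y * fderiv ℝ w (x + r • y) y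
      = ∫ y, g (x + r • y) := by simp only [g, add_sub_cancel_left, inv_smul_smul₀ hr.ne']
    _ = |(r ^ Module.finrank ℝ E)⁻¹| • ∫ z, g (x + z) :=
        Measure.integral_comp_smul _ (fun z ↦ g (x + z)) r
    _ = 0 := by rw [integral_add_left_eq_self, htest, smul_zero]

theorem hasDerivAt_integral_radialBump_smul {F : Type*} [NormedAddCommGroup F] [NormedSpace ℝ F]
    {f : E → F} {t : ℝ} (hf : ∀ y ∈ closedBall (0 : E) 1, ContDiffAt ℝ 1 f (x + t • y)) :
    HasDerivAt (fun t : ℝ ↦ ∫ y, radialBump y • f (x + t • y))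
      (∫ y, radialBump y • fderiv ℝ f (x + t • y) y) t := by
  let L : F ≃L[ℝ] (ℝ →L[ℝ] F) := ContinuousLinearMap.toSpanSingletonCLE
  have hfderiv : ∀ y ∈ closedBall (0 : E) 1,
      radialBump y • fderiv ℝ (fun t : ℝ ↦ f (x + t • y)) t =
        L (radialBump y • fderiv ℝ f (x + t • y) y) := fun y hy ↦ by
    rw [map_smul, ← toSpanSingleton_deriv,
      ((hf y hy).differentiableAt one_ne_zero).deriv_comp_add_smul]
    rfl
  refine (hasFDerivAt_integral_radialBump_smul_comp (A := fun p : ℝ × E ↦ x + p.1 • p.2)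
    (by fun_prop) hf).congr_fderiv ?_
  rw [← setIntegral_radialBump_smul, setIntegral_congr_fun measurableSet_closedBall hfderiv,
    L.integral_comp_comm, setIntegral_radialBump_smul]
  rfl

theorem hasMeanValueProperty_of_isWeaklyDivergenceFree_gradient
    (h : IsWeaklyDivergenceFree (∇ w) U) (hU : IsOpen U) (hw : ContDiffOn ℝ 1 w U) :
    HasMeanValueProperty w U := by
  intro x r hr hxr
  have hw_at {t : ℝ} (ht : t ∈ Icc 0 r) {y : E} (hy : y ∈ closedBall (0 : E) 1) :
      ContDiffAt ℝ 1 w (x + t • y) :=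
    hw.contDiffAt (hU.mem_nhds (hxr (closedBall_subset_closedBall ht.2
      (add_smul_mem_closedBall x ht.1 hy))))
  have hmean (t : ℝ) (ht : t ∈ Icc 0 r) := hasDerivAt_integral_radialBump_smul fun y ↦ hw_at ht
  obtain ⟨t, ht, hslope⟩ := exists_hasDerivAt_eq_slope _ _ hr
    (fun t ht ↦ (hmean t ht).continuousAt.continuousWithinAt)
    (fun t ht ↦ hmean t (Ioo_subset_Icc_self ht))
  simp only [smul_eq_mul] at hslope
  rw [integral_radialBump_mul_fderiv_eq_zero h ht.1
    ((closedBall_subset_closedBall ht.2.le).trans hxr)] at hslope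
  have hconst := (div_eq_zero_iff.1 hslope.symm).resolve_right (by linarith)
  simpa [sub_eq_zero, integral_mul_const] using hconst

end Divergence

section HarmonicVectorField

variable {E : Type*} [NormedAddCommGroup E] [InnerProductSpace ℝ E]
  {w : E → ℝ} {V : E → E} {U : Set E} {x : E}

/-- `V` is a `C²` vector field on `U` which is curl free (its derivative is self-adjoint) and
divergence free. Locally these are the gradients of harmonic functions. -/
structure IsHarmonicVectorField (V : E → E) (U : Set E) : Prop where
  contDiffAt : ∀ x ∈ U, ContDiffAt ℝ 2 V x
  isSymmetric : ∀ x ∈ U, (fderiv ℝ V x : E →ₗ[ℝ] E).IsSymmetric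
  divergence_eq_zero : ∀ x ∈ U, divergence V x = 0

theorem IsHarmonicVectorField.hasFDerivAt_norm_sq (hV : IsHarmonicVectorField V U) (hx : x ∈ U) :
    HasFDerivAt (fun y ↦ ‖V y‖ ^ 2) (2 • innerSL ℝ (fderiv ℝ V x (V x))) x := by
  refine ((hV.contDiffAt x hx).differentiableAt two_ne_zero).hasFDerivAt.norm_sq.congr_fderiv ?_
  ext h
  simpa using (hV.isSymmetric x hx (V x) h).symm

variable [FiniteDimensional ℝ E]

theorem divergence_fderiv_apply_self (hV : ContDiffAt ℝ 2 V x) :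
    divergence (fun y ↦ fderiv ℝ V y (V y)) x =
      LinearMap.trace ℝ E (fderiv ℝ V x ∘L fderiv ℝ V x) + fderiv ℝ (divergence V) x (V x) := by
  let tr : (E →L[ℝ] E) →L[ℝ] ℝ :=
    (LinearMap.trace ℝ E ∘ₗ ContinuousLinearMap.coeLM ℝ).toContinuousLinearMap
  have hV' : DifferentiableAt ℝ (fderiv ℝ V) x :=
    (hV.fderiv_right (m := 1) le_rfl).differentiableAt one_ne_zero
  have hfderiv : fderiv ℝ (fun y ↦ fderiv ℝ V y (V y)) x =
      fderiv ℝ V x ∘L fderiv ℝ V x + fderiv ℝ (fderiv ℝ V) x (V x) := by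
    ext h
    rw [fderiv_clm_apply hV' (hV.differentiableAt two_ne_zero)]
    simp [(hV.isSymmSndFDerivAt (by simp)) h (V x)]
  have htrace : fderiv ℝ (divergence V) x (V x) = tr (fderiv ℝ (fderiv ℝ V) x (V x)) :=
    congr($((tr.hasFDerivAt.comp x hV'.hasFDerivAt).fderiv) (V x))
  rw [htrace, divergence, hfderiv]
  exact map_add tr _ _

theorem trace_comp_self_nonneg {A : E →L[ℝ] E} (hA : (A : E →ₗ[ℝ] E).IsSymmetric) :
    0 ≤ LinearMap.trace ℝ E (A ∘L A) := by
  rw [LinearMap.trace_eq_sum_inner _ (stdOrthonormalBasis ℝ E)]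
  exact Finset.sum_nonneg fun i _ ↦
    real_inner_self_nonneg.trans_eq (hA (stdOrthonormalBasis ℝ E i) _)

theorem IsHarmonicVectorField.divergence_fderiv_apply_self_nonneg
    (hV : IsHarmonicVectorField V U) (hU : IsOpen U) (hx : x ∈ U) :
    0 ≤ divergence (fun y ↦ fderiv ℝ V y (V y)) x := by
  have hdiv : divergence V =ᶠ[𝓝 x] fun _ ↦ 0 :=
    Filter.eventually_of_mem (hU.mem_nhds hx) hV.divergence_eq_zero
  rw [divergence_fderiv_apply_self (hV.contDiffAt x hx), hdiv.fderiv_eq]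
  simpa using trace_comp_self_nonneg (hV.isSymmetric x hx)

/-- Bochner's formula: `Δ ‖V‖² = 2 div ((V · ∇) V) = 2 tr ((∇V)²) ≥ 0`. -/
theorem IsHarmonicVectorField.laplacian_norm_sq_nonneg (hV : IsHarmonicVectorField V U)
    (hU : IsOpen U) (hx : x ∈ U) : 0 ≤ Δ (fun y ↦ ‖V y‖ ^ 2) x := by
  have hgradient : ∇ (fun y ↦ ‖V y‖ ^ 2) =ᶠ[𝓝 x] fun y ↦ (2 : ℝ) • fderiv ℝ V y (V y) := by
    filter_upwards [hU.mem_nhds hx] with y hy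
    refine ext_inner_right ℝ fun h ↦ ?_
    simp [inner_gradient_left, (hV.hasFDerivAt_norm_sq hy).fderiv, inner_smul_left]
  have hdifferentiable : DifferentiableAt ℝ (fun y ↦ fderiv ℝ V y (V y)) x :=
    (((hV.contDiffAt x hx).fderiv_right (m := 1) le_rfl).differentiableAt one_ne_zero).clm_apply
      ((hV.contDiffAt x hx).differentiableAt two_ne_zero)
  rw [← divergence_gradient ((hV.contDiffAt x hx).norm_sq ℝ), divergence, hgradient.fderiv_eq,
    fderiv_fun_const_smul hdifferentiable, ContinuousLinearMap.toLinearMap_smul, map_smul]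
  exact smul_nonneg zero_le_two (hV.divergence_fderiv_apply_self_nonneg hU hx)

variable [MeasurableSpace E] [BorelSpace E]

theorem analyticOnNhd_of_harmonicOnNhd (hw : InnerProductSpace.HarmonicOnNhd w U)
    (hU : IsOpen U) : AnalyticOnNhd ℝ w U :=
  (hasMeanValueProperty_of_isWeaklyDivergenceFree_gradient
    (isWeaklyDivergenceFree_gradient_of_harmonicOnNhd hw) hU
    (hw.contDiffOn.of_le one_le_two)).analyticOnNhd hU hw.continuousOn

theorem isHarmonicVectorField_gradient (hw : InnerProductSpace.HarmonicOnNhd w U)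
    (hU : IsOpen U) : IsHarmonicVectorField (∇ w) U where
  contDiffAt x hx := contDiffAt_gradient (n := 3) (m := 2)
    (analyticOnNhd_of_harmonicOnNhd hw hU x hx).contDiffAt le_rfl
  isSymmetric x hx h k := by
    rw [real_inner_comm]
    exact (inner_fderiv_gradient_apply (hw x hx).1 k h).trans
      (((hw x hx).1.isSymmSndFDerivAt (by simp) h k).trans
        (inner_fderiv_gradient_apply (hw x hx).1 h k).symm)
  divergence_eq_zero x hx := (divergence_gradient (hw x hx).1).trans (hw x hx).2.self_of_nhds

end HarmonicVectorField

section CompEventuallyZero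

theorem intervalIntegral_eventuallyEq_zero {χ : ℝ → ℝ} (hχ : χ =ᶠ[𝓝 0] 0) :
    (fun t ↦ ∫ r in (0)..t, χ r) =ᶠ[𝓝 0] 0 := by
  obtain ⟨ε, hε, h⟩ := Metric.eventually_nhds_iff_ball.1 hχ
  filter_upwards [ball_mem_nhds 0 hε] with t ht
  refine intervalIntegral.integral_zero_ae (ae_of_all _ fun r hr ↦ h r ?_)
  have := (convex_ball (0 : ℝ) ε).ordConnected.uIcc_subset (mem_ball_self hε) ht
  exact this (uIoc_subset_uIcc hr)

variable {X : Type*} [TopologicalSpace X] {χ : ℝ → ℝ} {s η g : X → ℝ} {x : X}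

theorem comp_eventuallyEq_zero (hχ : χ =ᶠ[𝓝 0] 0) (hs : ContinuousAt s x) (hx : s x = 0) :
    (fun y ↦ χ (s y)) =ᶠ[𝓝 x] fun _ ↦ 0 :=
  (hx ▸ hs : Tendsto s (𝓝 x) (𝓝 0)).eventually hχ

theorem continuousAt_comp_smul_of_eventuallyEq_zero {F : Type*} [NormedAddCommGroup F]
    [NormedSpace ℝ F] {g : X → F} (hχ : Continuous χ) (hχ0 : χ =ᶠ[𝓝 0] 0)
    (hs : ContinuousAt s x) (hg : s x ≠ 0 → ContinuousAt g x) :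
    ContinuousAt (fun y ↦ χ (s y) • g y) x := by
  by_cases hx : s x = 0
  · refine continuousAt_const.congr (f := fun _ ↦ 0) ?_
    filter_upwards [comp_eventuallyEq_zero hχ0 hs hx] with y hy
    rw [hy, zero_smul]
  · exact (hχ.continuousAt.comp hs).smul (hg hx)

theorem continuousAt_deriv_comp_mul_of_eventuallyEq_zero (hχ : ContDiff ℝ 1 χ) (hχ0 : χ =ᶠ[𝓝 0] 0)
    (hs : ContinuousAt s x) (hg : s x ≠ 0 → ContinuousAt g x) :
    ContinuousAt (fun y ↦ deriv χ (s y) * g y) x :=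
  continuousAt_comp_smul_of_eventuallyEq_zero (contDiff_one_iff_deriv.1 hχ).2
    (by simpa using! hχ0.deriv) hs hg

theorem tsupport_mul_comp_subset (hχ0 : χ =ᶠ[𝓝 0] 0) (hs : ∀ x ∈ tsupport η, ContinuousAt s x) :
    tsupport (fun x ↦ η x * χ (s x)) ⊆ tsupport η ∩ {x | s x ≠ 0} := by
  intro x hx
  have hxη : x ∈ tsupport η := tsupport_mul_subset_left hx
  refine ⟨hxη, fun hx0 ↦ notMem_tsupport_iff_eventuallyEq.2 ?_ hx⟩
  filter_upwards [comp_eventuallyEq_zero hχ0 (hs x hxη) hx0] with y hy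
  rw [hy, mul_zero, Pi.zero_apply]

variable {E : Type*} [NormedAddCommGroup E] [NormedSpace ℝ E] {s η : E → ℝ} {x : E}

theorem contDiffAt_comp_of_eventuallyEq_zero {n : ℕ∞} (hχ : ContDiff ℝ n χ)
    (hχ0 : χ =ᶠ[𝓝 0] 0) (hs : ContinuousAt s x) (hs' : s x ≠ 0 → ContDiffAt ℝ n s x) :
    ContDiffAt ℝ n (fun y ↦ χ (s y)) x := by
  by_cases hx : s x = 0
  · exact contDiffAt_const.congr_of_eventuallyEq (comp_eventuallyEq_zero hχ0 hs hx)
  · exact hχ.contDiffAt.comp x (hs' hx)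

theorem fderiv_comp_of_eventuallyEq_zero (hχ : Differentiable ℝ χ) (hχ0 : χ =ᶠ[𝓝 0] 0)
    (hs : ContinuousAt s x) (hs' : s x ≠ 0 → DifferentiableAt ℝ s x) :
    fderiv ℝ (fun y ↦ χ (s y)) x = deriv χ (s x) • fderiv ℝ s x := by
  by_cases hx : s x = 0
  · rw [(comp_eventuallyEq_zero hχ0 hs hx).fderiv_eq, hx, hχ0.deriv_eq]
    simp
  · exact ((hχ _).hasDerivAt.comp_hasFDerivAt x (hs' hx).hasFDerivAt).fderiv

theorem contDiff_mul_comp_of_eventuallyEq_zero {n : ℕ∞} (hη : ContDiff ℝ n η)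
    (hχ : ContDiff ℝ n χ) (hχ0 : χ =ᶠ[𝓝 0] 0) (hs : ∀ x ∈ tsupport η, ContinuousAt s x)
    (hs' : ∀ x ∈ tsupport η, s x ≠ 0 → ContDiffAt ℝ n s x) :
    ContDiff ℝ n fun x ↦ η x * χ (s x) := by
  refine contDiff_iff_contDiffAt.2 fun x ↦ ?_
  by_cases hx : x ∈ tsupport η
  · exact hη.contDiffAt.mul (contDiffAt_comp_of_eventuallyEq_zero hχ hχ0 (hs x hx) (hs' x hx))
  · refine contDiffAt_const.congr_of_eventuallyEq (f := fun _ ↦ 0) ?_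
    filter_upwards [notMem_tsupport_iff_eventuallyEq.1 hx] with y hy
    simp [hy]

theorem fderiv_mul_comp_of_eventuallyEq_zero (hη : Differentiable ℝ η)
    (hχ : ContDiff ℝ 1 χ) (hχ0 : χ =ᶠ[𝓝 0] 0) (hs : ∀ x ∈ tsupport η, ContinuousAt s x)
    (hs' : ∀ x ∈ tsupport η, s x ≠ 0 → ContDiffAt ℝ 1 s x) (x v : E) :
    fderiv ℝ (fun x ↦ η x * χ (s x)) x v =
      χ (s x) * fderiv ℝ η x v + η x * (deriv χ (s x) * fderiv ℝ s x v) := by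
  by_cases hx : x ∈ tsupport η
  · have hcomp : DifferentiableAt ℝ (fun x ↦ χ (s x)) x :=
      (contDiffAt_comp_of_eventuallyEq_zero (n := 1) hχ hχ0 (hs x hx)
        (hs' x hx)).differentiableAt one_ne_zero
    rw [fderiv_fun_mul (hη x) hcomp,
      fderiv_comp_of_eventuallyEq_zero (hχ.differentiable one_ne_zero) hχ0 (hs x hx)
        fun h ↦ (hs' x hx h).differentiableAt one_ne_zero]
    simp [add_comm]
  · have h : (fun x ↦ η x * χ (s x)) =ᶠ[𝓝 x] fun _ ↦ 0 := by
      filter_upwards [notMem_tsupport_iff_eventuallyEq.1 hx] with y hy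
      simp [hy]
    rw [h.fderiv_eq, image_eq_zero_of_notMem_tsupport hx,
      image_eq_zero_of_notMem_tsupport (mt (fun h ↦ tsupport_fderiv_subset ℝ h) hx)]
    simp

end CompEventuallyZero

section Energy

variable {E : Type*} [NormedAddCommGroup E] [InnerProductSpace ℝ E] [FiniteDimensional ℝ E]
  {χ : ℝ → ℝ} {s ζ η g : E → ℝ}

theorem tsupport_gradient_subset : tsupport (∇ ζ) ⊆ tsupport ζ :=
  closure_minimal (fun x hx ↦ tsupport_fderiv_subset ℝ (subset_tsupport _ fun h ↦ hx (by
    rw [gradient, h, map_zero]))) (isClosed_tsupport _)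

theorem tsupport_laplacian_subset : tsupport (Δ ζ) ⊆ tsupport ζ := by
  refine closure_minimal (fun x hx ↦ ?_) (isClosed_tsupport _)
  by_contra h
  refine hx ?_
  rw [(InnerProductSpace.laplacian_congr_nhds
    (notMem_tsupport_iff_eventuallyEq.1 h)).self_of_nhds]
  exact congr_fun (InnerProductSpace.laplacian_const (c := (0 : ℝ))) x

theorem continuous_laplacian (hζ : ContDiff ℝ 2 ζ) : Continuous (Δ ζ) := by
  rw [InnerProductSpace.laplacian_eq_iteratedFDeriv_stdOrthonormalBasis]
  have := hζ.continuous_iteratedFDeriv le_rfl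
  fun_prop

variable [MeasurableSpace E] [BorelSpace E]

theorem integrable_mul_of_continuousAt (hη : Continuous η) (hηc : HasCompactSupport η)
    (hg : ∀ x ∈ tsupport η, ContinuousAt g x) : Integrable fun x ↦ η x * g x :=
  integrable_of_continuousOn_of_support_subset hηc
    (fun x hx ↦ (hη.continuousAt.mul (hg x hx)).continuousWithinAt)
    ((Function.support_mul_subset_left _ _).trans (subset_tsupport η))

theorem integrable_fderiv_apply {V : E → E} (hη : ContDiff ℝ 1 η) (hηc : HasCompactSupport η)
    (hV : ∀ x ∈ tsupport η, ContinuousAt V x) : Integrable fun x ↦ fderiv ℝ η x (V x) := by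
  refine integrable_of_continuousOn_of_support_subset (K := tsupport η) hηc (fun x hx ↦
    ((hη.continuous_fderiv one_ne_zero).continuousAt.clm_apply (hV x hx)).continuousWithinAt)
    fun x hx ↦ tsupport_fderiv_subset ℝ (subset_tsupport _ fun h ↦ hx ?_)
  simp [h]

theorem integrable_comp_mul_fderiv_apply {V : E → E} (hη : ContDiff ℝ 1 η)
    (hηc : HasCompactSupport η) (hχ : Continuous χ) (hχ0 : χ =ᶠ[𝓝 0] 0)
    (hs : ∀ x ∈ tsupport η, ContinuousAt s x)
    (hV : ∀ x ∈ tsupport η, s x ≠ 0 → ContinuousAt V x) :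
    Integrable fun x ↦ χ (s x) * fderiv ℝ η x (V x) := by
  simpa only [map_smul, smul_eq_mul] using integrable_fderiv_apply (V := fun x ↦ χ (s x) • V x)
    hη hηc fun x hx ↦ continuousAt_comp_smul_of_eventuallyEq_zero hχ hχ0 (hs x hx) (hV x hx)

/-- Test the inequality `Δ s ≥ 0` against `ζ χ(s)`. -/
theorem integral_mul_deriv_comp_mul_norm_gradient_sq_le_neg (hζ : ContDiff ℝ 1 ζ)
    (hζc : HasCompactSupport ζ) (hζ0 : ∀ x, 0 ≤ ζ x) (hχ : ContDiff ℝ 1 χ)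
    (hχ0 : χ =ᶠ[𝓝 0] 0) (hχnonneg : ∀ t, 0 ≤ χ t) (hs : ∀ x ∈ tsupport ζ, ContinuousAt s x)
    (hs' : ∀ x ∈ tsupport ζ, s x ≠ 0 → ContDiffAt ℝ 2 s x)
    (hΔ : ∀ x ∈ tsupport ζ, s x ≠ 0 → 0 ≤ Δ s x) :
    ∫ x, ζ x * (deriv χ (s x) * ‖∇ s x‖ ^ 2) ≤ -∫ x, χ (s x) * fderiv ℝ ζ x (∇ s x) := by
  have hs1 : ∀ x ∈ tsupport ζ, s x ≠ 0 → ContDiffAt ℝ 1 s x := fun x hx h ↦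
    (hs' x hx h).of_le one_le_two
  have hgradient : ∀ x ∈ tsupport ζ, s x ≠ 0 → ContDiffAt ℝ 1 (∇ s) x := fun x hx h ↦
    contDiffAt_gradient (n := 2) (m := 1) (hs' x hx h) le_rfl
  have hsupport := tsupport_mul_comp_subset hχ0 hs
  have htest := integral_fderiv_apply_eq_neg_integral_mul_divergence (V := ∇ s)
    (fun x _ ↦ (contDiff_mul_comp_of_eventuallyEq_zero (n := 1) hζ hχ hχ0 hs hs1).contDiffAt)
    (fun x hx ↦ hgradient x (hsupport hx).1 (hsupport hx).2)
    ((HasCompactSupport.mul_right hζc).isCompact.inter_right (isClosed_tsupport _))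
  have hsubharmonic : 0 ≤ ∫ x, ζ x * χ (s x) * divergence (∇ s) x := by
    refine integral_nonneg fun x ↦ ?_
    by_cases hx : x ∈ tsupport fun x ↦ ζ x * χ (s x)
    · rw [divergence_gradient (hs' x (hsupport hx).1 (hsupport hx).2)]
      exact mul_nonneg (mul_nonneg (hζ0 x) (hχnonneg _))
        (hΔ x (hsupport hx).1 (hsupport hx).2)
    · simp [image_eq_zero_of_notMem_tsupport hx]
  have hdζ : Integrable fun x ↦ χ (s x) * fderiv ℝ ζ x (∇ s x) :=
    integrable_comp_mul_fderiv_apply hζ hζc hχ.continuous hχ0 hs fun x hx h ↦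
      (hgradient x hx h).continuousAt
  have henergy : Integrable fun x ↦ ζ x * (deriv χ (s x) * ‖∇ s x‖ ^ 2) :=
    integrable_mul_of_continuousAt hζ.continuous hζc fun x hx ↦
      continuousAt_deriv_comp_mul_of_eventuallyEq_zero hχ hχ0 (hs x hx) fun h ↦
        (hgradient x hx h).continuousAt.norm.pow 2
  simp only [fderiv_mul_comp_of_eventuallyEq_zero (hζ.differentiable one_ne_zero) hχ hχ0 hs hs1,
    ← inner_gradient_left (𝕜 := ℝ) (f := s), real_inner_self_eq_norm_sq] at htest
  rw [integral_add hdζ henergy] at htest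
  linarith

/-- Integrate by parts onto `ζ`: `χ'(s) ∇s` is the gradient of `χ(s)`. -/
theorem integral_deriv_comp_mul_fderiv_gradient (hζ : ContDiff ℝ 2 ζ) (hζc : HasCompactSupport ζ)
    (hχ : ContDiff ℝ 1 χ) (hχ0 : χ =ᶠ[𝓝 0] 0) (hs : ∀ x ∈ tsupport ζ, ContinuousAt s x)
    (hs' : ∀ x ∈ tsupport ζ, s x ≠ 0 → ContDiffAt ℝ 1 s x) :
    ∫ x, deriv χ (s x) * fderiv ℝ ζ x (∇ s x) = -∫ x, χ (s x) * Δ ζ x := by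
  have hchain (x : E) :
      fderiv ℝ (fun x ↦ χ (s x)) x (∇ ζ x) = deriv χ (s x) * fderiv ℝ ζ x (∇ s x) := by
    by_cases hx : x ∈ tsupport ζ
    · rw [fderiv_comp_of_eventuallyEq_zero (hχ.differentiable one_ne_zero) hχ0 (hs x hx)
        fun h ↦ (hs' x hx h).differentiableAt one_ne_zero, ← inner_gradient_left (𝕜 := ℝ),
        real_inner_comm, inner_gradient_left]
      rfl
    · rw [← inner_gradient_left (f := ζ)]
      simp [image_eq_zero_of_notMem_tsupport (mt (fun h ↦ tsupport_gradient_subset h) hx)]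
  simp only [← hchain, ← divergence_gradient hζ.contDiffAt]
  exact integral_fderiv_apply_eq_neg_integral_mul_divergence
    (fun x hx ↦ contDiffAt_comp_of_eventuallyEq_zero (n := 1) hχ hχ0
      (hs x (tsupport_gradient_subset hx)) (hs' x (tsupport_gradient_subset hx)))
    (fun x _ ↦ contDiffAt_gradient (n := 2) (m := 1) hζ.contDiffAt le_rfl)
    ((hζc.of_isClosed_subset (isClosed_tsupport _) tsupport_gradient_subset).inter_left
      (isClosed_tsupport _))

theorem neg_integral_comp_mul_fderiv_gradient_le (hζ : ContDiff ℝ 2 ζ)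
    (hζc : HasCompactSupport ζ) (hχ : Continuous χ) (hχ0 : χ =ᶠ[𝓝 0] 0)
    (hχ1 : ∀ t, χ t ∈ Icc 0 1) (hs : ∀ x ∈ tsupport ζ, ContinuousAt s x)
    (hs0 : ∀ x ∈ tsupport ζ, 0 ≤ s x) (hs' : ∀ x ∈ tsupport ζ, s x ≠ 0 → ContDiffAt ℝ 1 s x) :
    -∫ x, χ (s x) * fderiv ℝ ζ x (∇ s x) ≤ ∫ x, |Δ ζ x| * s x := by
  let H (t : ℝ) : ℝ := ∫ r in (0)..t, χ r
  have hH' (t : ℝ) : HasDerivAt H (χ t) t := (hχ.integral_hasStrictDerivAt 0 t).hasDerivAt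
  have hderiv : deriv H = χ := funext fun t ↦ (hH' t).deriv
  have hH : ContDiff ℝ 1 H :=
    contDiff_one_iff_deriv.2 ⟨fun t ↦ (hH' t).differentiableAt, hderiv ▸ hχ⟩
  have hH_le {t : ℝ} (ht : 0 ≤ t) : |H t| ≤ t := by
    simpa [abs_of_nonneg ht] using intervalIntegral.norm_integral_le_of_norm_le_const (f := χ)
      (C := 1) (a := 0) (b := t) fun r _ ↦ (abs_of_nonneg (hχ1 r).1).trans_le (hχ1 r).2
  have hgreen := integral_deriv_comp_mul_fderiv_gradient hζ hζc hH
    (intervalIntegral_eventuallyEq_zero hχ0) hs hs'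
  rw [hderiv] at hgreen
  rw [hgreen, neg_neg]
  have hbound (x : E) : ‖H (s x) * Δ ζ x‖ ≤ |Δ ζ x| * s x := by
    by_cases hx : x ∈ tsupport ζ
    · rw [norm_mul, mul_comm]
      exact mul_le_mul_of_nonneg_left (hH_le (hs0 x hx)) (abs_nonneg _)
    · simp [image_eq_zero_of_notMem_tsupport (mt (fun h ↦ tsupport_laplacian_subset h) hx)]
  have hintegrable : Integrable fun x ↦ |Δ ζ x| * s x :=
    integrable_of_continuousOn_of_support_subset hζc
      (fun x hx ↦ ((continuous_laplacian hζ).abs.continuousAt.mul (hs x hx)).continuousWithinAt)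
      fun x hx ↦ tsupport_laplacian_subset (subset_tsupport _ (abs_ne_zero.1
        (left_ne_zero_of_mul hx)))
  exact (le_abs_self _).trans (norm_integral_le_of_norm_le hintegrable (ae_of_all _ hbound))

theorem integral_mul_deriv_comp_mul_norm_gradient_sq_le (hζ : ContDiff ℝ 2 ζ)
    (hζc : HasCompactSupport ζ) (hζ0 : ∀ x, 0 ≤ ζ x) (hχ : ContDiff ℝ 1 χ)
    (hχ0 : χ =ᶠ[𝓝 0] 0) (hχ1 : ∀ t, χ t ∈ Icc 0 1) (hs : ∀ x ∈ tsupport ζ, ContinuousAt s x)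
    (hs0 : ∀ x ∈ tsupport ζ, 0 ≤ s x) (hs' : ∀ x ∈ tsupport ζ, s x ≠ 0 → ContDiffAt ℝ 2 s x)
    (hΔ : ∀ x ∈ tsupport ζ, s x ≠ 0 → 0 ≤ Δ s x) :
    ∫ x, ζ x * (deriv χ (s x) * ‖∇ s x‖ ^ 2) ≤ ∫ x, |Δ ζ x| * s x :=
  (integral_mul_deriv_comp_mul_norm_gradient_sq_le_neg (hζ.of_le one_le_two) hζc hζ0 hχ hχ0
    (fun t ↦ (hχ1 t).1) hs hs' hΔ).trans
    (neg_integral_comp_mul_fderiv_gradient_le hζ hζc hχ.continuous hχ0 hχ1 hs hs0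
      fun x hx h ↦ (hs' x hx h).of_le one_le_two)

theorem integral_comp_mul_fderiv_apply_eq_neg {V : E → E} (hη : ContDiff ℝ 1 η)
    (hηc : HasCompactSupport η) (hχ : ContDiff ℝ 1 χ) (hχ0 : χ =ᶠ[𝓝 0] 0)
    (hs : ∀ x ∈ tsupport η, ContinuousAt s x)
    (hs' : ∀ x ∈ tsupport η, s x ≠ 0 → ContDiffAt ℝ 1 s x)
    (hV : ∀ x ∈ tsupport η, s x ≠ 0 → ContDiffAt ℝ 1 V x)
    (hdiv : ∀ x ∈ tsupport η, s x ≠ 0 → divergence V x = 0) :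
    ∫ x, χ (s x) * fderiv ℝ η x (V x) = -∫ x, η x * (deriv χ (s x) * fderiv ℝ s x (V x)) := by
  have hsupport := tsupport_mul_comp_subset hχ0 hs
  have htest := isWeaklyDivergenceFree_of_divergence_eq_zero (U := tsupport η ∩ {x | s x ≠ 0})
    (fun x hx ↦ hV x hx.1 hx.2) (fun x hx ↦ hdiv x hx.1 hx.2)
    (contDiff_mul_comp_of_eventuallyEq_zero (n := 1) hη hχ hχ0 hs hs') hηc.mul_right hsupport
  have hdη : Integrable fun x ↦ χ (s x) * fderiv ℝ η x (V x) :=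
    integrable_comp_mul_fderiv_apply hη hηc hχ.continuous hχ0 hs fun x hx h ↦
      (hV x hx h).continuousAt
  have hds : Integrable fun x ↦ η x * (deriv χ (s x) * fderiv ℝ s x (V x)) :=
    integrable_mul_of_continuousAt hη.continuous hηc fun x hx ↦
      continuousAt_deriv_comp_mul_of_eventuallyEq_zero hχ hχ0 (hs x hx) fun h ↦
        ((hs' x hx h).continuousAt_fderiv one_ne_zero).clm_apply (hV x hx h).continuousAt
  simp only [fderiv_mul_comp_of_eventuallyEq_zero (hη.differentiable one_ne_zero) hχ hχ0 hs hs']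
    at htest
  rw [integral_add hdη hds] at htest
  exact eq_neg_of_add_eq_zero_left htest

end Energy

section LayerCutoff

variable {ε t : ℝ}

/-- A smooth cutoff which vanishes for `t ≤ ε`, equals `1` for `t ≥ 2 ε`, and increases in the
layer between. -/
noncomputable def layerCutoff (ε t : ℝ) : ℝ := Real.smoothTransition (t / ε - 1)

theorem contDiff_layerCutoff {n : ℕ∞} : ContDiff ℝ n (layerCutoff ε) :=
  Real.smoothTransition.contDiff.comp (by fun_prop)

theorem layerCutoff_mem_Icc : layerCutoff ε t ∈ Icc 0 1 :=
  ⟨Real.smoothTransition.nonneg _, Real.smoothTransition.le_one _⟩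

theorem layerCutoff_eventuallyEq_zero (hε : 0 < ε) : layerCutoff ε =ᶠ[𝓝 0] 0 := by
  filter_upwards [Iio_mem_nhds hε] with t ht
  exact Real.smoothTransition.zero_of_nonpos (sub_nonpos.2 ((div_le_one hε).2 (mem_Iio.1 ht).le))

theorem deriv_layerCutoff_nonneg (hε : 0 < ε) : 0 ≤ deriv (layerCutoff ε) t :=
  Monotone.deriv_nonneg fun _ _ h ↦ Real.smoothTransition.monotone (by gcongr)

theorem eventually_two_lt_div (ht : 0 < t) : ∀ᶠ ε in 𝓝[>] 0, 2 < t / ε := by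
  filter_upwards [Ioo_mem_nhdsGT (half_pos ht)] with ε hε
  rw [lt_div_iff₀ hε.1]
  linarith [hε.2]

theorem tendsto_layerCutoff (ht : 0 < t) :
    Tendsto (fun ε ↦ layerCutoff ε t) (𝓝[>] 0) (𝓝 1) := by
  refine tendsto_const_nhds.congr' ?_
  filter_upwards [eventually_two_lt_div ht] with ε hε
  exact (Real.smoothTransition.one_of_one_le (by linarith)).symm

theorem mul_deriv_layerCutoff :
    t * deriv (layerCutoff ε) t = t / ε * deriv Real.smoothTransition (t / ε - 1) := by
  have h : HasDerivAt (layerCutoff ε) _ t :=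
    (Real.smoothTransition.contDiff.differentiable (n := 1) one_ne_zero _).hasDerivAt.comp t
      (((hasDerivAt_id t).div_const ε).sub_const 1)
  rw [h.deriv]
  ring

theorem deriv_smoothTransition_of_notMem_Icc {r : ℝ} (hr : r ∉ Icc (0 : ℝ) 1) :
    deriv Real.smoothTransition r = 0 := by
  rw [mem_Icc, not_and_or, not_le, not_le] at hr
  obtain hr | hr := hr
  · have h : Real.smoothTransition =ᶠ[𝓝 r] fun _ ↦ 0 := by
      filter_upwards [Iio_mem_nhds hr] with t ht
      exact Real.smoothTransition.zero_of_nonpos (mem_Iio.1 ht).le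
    rw [h.deriv_eq, deriv_const]
  · have h : Real.smoothTransition =ᶠ[𝓝 r] fun _ ↦ 1 := by
      filter_upwards [Ioi_mem_nhds hr] with t ht
      exact Real.smoothTransition.one_of_one_le (mem_Ioi.1 ht).le
    rw [h.deriv_eq, deriv_const]

theorem tendsto_mul_deriv_layerCutoff (ht : 0 ≤ t) :
    Tendsto (fun ε ↦ t * deriv (layerCutoff ε) t) (𝓝[>] 0) (𝓝 0) := by
  obtain rfl | ht := ht.eq_or_lt
  · simp
  · refine tendsto_const_nhds.congr' ?_
    filter_upwards [eventually_two_lt_div ht] with ε hε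
    rw [mul_deriv_layerCutoff, deriv_smoothTransition_of_notMem_Icc fun h ↦ by linarith [h.2],
      mul_zero]

theorem exists_forall_abs_mul_deriv_layerCutoff_le :
    ∃ M, ∀ ε t, |t * deriv (layerCutoff ε) t| ≤ M := by
  have hcont : Continuous fun r : ℝ ↦ (r + 1) * deriv Real.smoothTransition r :=
    (by fun_prop : Continuous fun r : ℝ ↦ r + 1).mul
      (Real.smoothTransition.contDiff (n := 1).continuous_deriv le_rfl)
  obtain ⟨M, hM⟩ := hcont.bounded_above_of_compact_support
    (HasCompactSupport.intro isCompact_Icc fun r hr ↦ by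
      rw [deriv_smoothTransition_of_notMem_Icc hr, mul_zero])
  refine ⟨M, fun ε t ↦ ?_⟩
  simpa only [mul_deriv_layerCutoff, sub_add_cancel, Real.norm_eq_abs] using hM (t / ε - 1)

end LayerCutoff

theorem exists_contDiff_forall_abs_le {E : Type*} [NormedAddCommGroup E] [NormedSpace ℝ E]
    [FiniteDimensional ℝ E] {η : E → ℝ} {D : Set E} {n : ℕ∞} (hη : Continuous η)
    (hηc : HasCompactSupport η) (hD : IsOpen D) (hηD : tsupport η ⊆ D) :
    ∃ ζ : E → ℝ, ContDiff ℝ n ζ ∧ HasCompactSupport ζ ∧ tsupport ζ ⊆ D ∧ ∀ x, |η x| ≤ ζ x := by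
  obtain ⟨K, hK, hηK, hKD⟩ := exists_compact_between hηc.isCompact hD hηD
  obtain ⟨f, hf1, hf0, hf⟩ := exists_contMDiffMap_one_nhds_of_subset_interior
    (modelWithCornersSelf ℝ E) (n := n) (isClosed_tsupport η) hηK
  obtain ⟨M, hM⟩ := hη.bounded_above_of_compact_support hηc
  have hsupport : Function.support (fun x ↦ M * f x) ⊆ K := fun x hx ↦ by
    by_contra hxK
    exact hx (by simp [hf0 x hxK])
  refine ⟨fun x ↦ M * f x, contDiff_const.mul f.contMDiff.contDiff,
    .of_support_subset_isCompact hK hsupport,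
    (closure_minimal hsupport hK.isClosed).trans hKD, fun x ↦ ?_⟩
  by_cases hx : x ∈ tsupport η
  · simpa [hf1.self_of_nhdsSet x hx] using hM x
  · rw [image_eq_zero_of_notMem_tsupport hx, abs_zero]
    exact mul_nonneg ((norm_nonneg _).trans (hM x)) (hf x).1

theorem abs_fderiv_apply_le_add {E : Type*} [NormedAddCommGroup E] [InnerProductSpace ℝ E]
    [CompleteSpace E] {s : E → ℝ} {δ : ℝ} (hδ : 0 < δ) (x v : E) :
    |fderiv ℝ s x v| ≤ δ * ‖∇ s x‖ ^ 2 + δ⁻¹ * ‖v‖ ^ 2 := by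
  have hAMGM : 0 ≤ δ⁻¹ * (δ * ‖∇ s x‖ - ‖v‖) ^ 2 := by positivity
  calc |fderiv ℝ s x v| = |⟪∇ s x, v⟫_ℝ| := by rw [inner_gradient_left]
    _ ≤ ‖∇ s x‖ * ‖v‖ := abs_real_inner_le_norm _ _
    _ ≤ 2 * (‖∇ s x‖ * ‖v‖) := le_mul_of_one_le_left (by positivity) one_le_two
    _ ≤ δ * ‖∇ s x‖ ^ 2 + δ⁻¹ * ‖v‖ ^ 2 := by
      field_simp at hAMGM ⊢
      linarith

section Removability

variable {E : Type*} [NormedAddCommGroup E] [InnerProductSpace ℝ E] [FiniteDimensional ℝ E]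
  [MeasurableSpace E] [BorelSpace E] {χ : ℝ → ℝ} {s η ζ : E → ℝ} {V : E → E} {U D : Set E} {δ : ℝ}

theorem abs_integral_mul_deriv_comp_mul_fderiv_apply_le (hζ : Continuous ζ)
    (hζc : HasCompactSupport ζ) (hηζ : ∀ x, |η x| ≤ ζ x) (hχ : ContDiff ℝ 1 χ)
    (hχ0 : χ =ᶠ[𝓝 0] 0) (hχ' : ∀ t, 0 ≤ deriv χ t) (hs : ∀ x ∈ tsupport ζ, ContinuousAt s x)
    (hs' : ∀ x ∈ tsupport ζ, s x ≠ 0 → ContDiffAt ℝ 1 s x)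
    (hV : ∀ x ∈ tsupport ζ, s x ≠ 0 → ContinuousAt V x) (hδ : 0 < δ) :
    |∫ x, η x * (deriv χ (s x) * fderiv ℝ s x (V x))| ≤
      δ * (∫ x, ζ x * (deriv χ (s x) * ‖∇ s x‖ ^ 2)) +
        δ⁻¹ * ∫ x, ζ x * (deriv χ (s x) * ‖V x‖ ^ 2) := by
  have hintegrable {W : E → E} (hW : ∀ x ∈ tsupport ζ, s x ≠ 0 → ContinuousAt W x) :
      Integrable fun x ↦ ζ x * (deriv χ (s x) * ‖W x‖ ^ 2) :=
    integrable_mul_of_continuousAt hζ hζc fun x hx ↦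
      continuousAt_deriv_comp_mul_of_eventuallyEq_zero hχ hχ0 (hs x hx) fun h ↦
        (hW x hx h).norm.pow 2
  have hgradient := hintegrable (W := ∇ s) fun x hx h ↦
    (contDiffAt_gradient (n := 1) (m := 0) (hs' x hx h) le_rfl).continuousAt
  have hpointwise (x : E) : ‖η x * (deriv χ (s x) * fderiv ℝ s x (V x))‖ ≤
      δ * (ζ x * (deriv χ (s x) * ‖∇ s x‖ ^ 2)) + δ⁻¹ * (ζ x * (deriv χ (s x) * ‖V x‖ ^ 2)) :=
    calc ‖η x * (deriv χ (s x) * fderiv ℝ s x (V x))‖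
        = |η x| * (deriv χ (s x) * |fderiv ℝ s x (V x)|) := by
          rw [norm_mul, norm_mul, Real.norm_of_nonneg (hχ' _), Real.norm_eq_abs, Real.norm_eq_abs]
      _ ≤ ζ x * (deriv χ (s x) * (δ * ‖∇ s x‖ ^ 2 + δ⁻¹ * ‖V x‖ ^ 2)) :=
          mul_le_mul (hηζ x)
            (mul_le_mul_of_nonneg_left (abs_fderiv_apply_le_add hδ x (V x)) (hχ' _))
            (mul_nonneg (hχ' _) (abs_nonneg _)) ((abs_nonneg _).trans (hηζ x))
      _ = _ := by ring
  rw [← integral_const_mul, ← integral_const_mul,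
    ← integral_add (hgradient.const_mul _) ((hintegrable hV).const_mul _)]
  exact norm_integral_le_of_norm_le
    ((hgradient.const_mul _).add ((hintegrable hV).const_mul _)) (ae_of_all _ hpointwise)

theorem IsHarmonicVectorField.abs_integral_comp_mul_fderiv_le (hV : IsHarmonicVectorField V U)
    (hU : IsOpen U) (hη : ContDiff ℝ 1 η) (hζ : ContDiff ℝ 2 ζ) (hζc : HasCompactSupport ζ)
    (hηζ : ∀ x, |η x| ≤ ζ x) (hVζ : ∀ x ∈ tsupport ζ, ContinuousAt V x)
    (hVU : ∀ x ∈ tsupport ζ, V x ≠ 0 → x ∈ U) (hχ : ContDiff ℝ 1 χ) (hχ0 : χ =ᶠ[𝓝 0] 0)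
    (hχ1 : ∀ t, χ t ∈ Icc 0 1) (hχ' : ∀ t, 0 ≤ deriv χ t) (hδ : 0 < δ) :
    |∫ x, χ (‖V x‖ ^ 2) * fderiv ℝ η x (V x)| ≤
      δ * (∫ x, |Δ ζ x| * ‖V x‖ ^ 2) + δ⁻¹ * ∫ x, ζ x * (deriv χ (‖V x‖ ^ 2) * ‖V x‖ ^ 2) := by
  have hζη : tsupport η ⊆ tsupport ζ := closure_mono fun x hx h ↦
    hx (abs_nonpos_iff.1 ((hηζ x).trans_eq h))
  have hU' : ∀ x ∈ tsupport ζ, ‖V x‖ ^ 2 ≠ 0 → x ∈ U := fun x hx h ↦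
    hVU x hx (by simpa using h)
  have hs : ∀ x ∈ tsupport ζ, ContinuousAt (fun x ↦ ‖V x‖ ^ 2) x := fun x hx ↦
    (hVζ x hx).norm.pow 2
  have hs' : ∀ x ∈ tsupport ζ, ‖V x‖ ^ 2 ≠ 0 → ContDiffAt ℝ 2 (fun x ↦ ‖V x‖ ^ 2) x :=
    fun x hx h ↦ (hV.contDiffAt x (hU' x hx h)).norm_sq ℝ
  rw [integral_comp_mul_fderiv_apply_eq_neg hη
    (hζc.of_isClosed_subset (isClosed_tsupport _) hζη) hχ hχ0 (fun x hx ↦ hs x (hζη hx))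
    (fun x hx h ↦ (hs' x (hζη hx) h).of_le one_le_two)
    (fun x hx h ↦ (hV.contDiffAt x (hU' x (hζη hx) h)).of_le one_le_two)
    fun x hx h ↦ hV.divergence_eq_zero x (hU' x (hζη hx) h), abs_neg]
  refine (abs_integral_mul_deriv_comp_mul_fderiv_apply_le hζ.continuous hζc hηζ hχ hχ0 hχ' hs
    (fun x hx h ↦ (hs' x hx h).of_le one_le_two) (fun x hx _ ↦ hVζ x hx) hδ).trans ?_
  refine add_le_add_left (mul_le_mul_of_nonneg_left ?_ hδ.le) _
  exact integral_mul_deriv_comp_mul_norm_gradient_sq_le hζ hζc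
    (fun x ↦ (abs_nonneg _).trans (hηζ x)) hχ hχ0 hχ1 hs (fun _ _ ↦ by positivity) hs'
    fun x hx h ↦ hV.laplacian_norm_sq_nonneg hU (hU' x hx h)

theorem tendsto_integral_layerCutoff_comp_mul {g : E → ℝ} (hs0 : ∀ x, 0 ≤ s x)
    (hg : Integrable g) (hgs : ∀ x, s x = 0 → g x = 0)
    (hmeas : ∀ ε > 0, AEStronglyMeasurable fun x ↦ layerCutoff ε (s x) * g x) :
    Tendsto (fun ε ↦ ∫ x, layerCutoff ε (s x) * g x) (𝓝[>] 0) (𝓝 (∫ x, g x)) := by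
  refine tendsto_integral_filter_of_dominated_convergence (fun x ↦ ‖g x‖)
    (eventually_mem_nhdsWithin.mono hmeas) (.of_forall fun ε ↦ ae_of_all _ fun x ↦ ?_) hg.norm
    (ae_of_all _ fun x ↦ ?_)
  · rw [norm_mul, Real.norm_of_nonneg layerCutoff_mem_Icc.1]
    exact mul_le_of_le_one_left (norm_nonneg _) layerCutoff_mem_Icc.2
  · obtain h | h := (hs0 x).eq_or_lt
    · simp [hgs x h.symm]
    · simpa using (tendsto_layerCutoff h).mul_const (g x)

theorem tendsto_integral_mul_deriv_layerCutoff_comp_mul (hζ : Continuous ζ)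
    (hζc : HasCompactSupport ζ) (hs : ∀ x ∈ tsupport ζ, ContinuousAt s x) (hs0 : ∀ x, 0 ≤ s x) :
    Tendsto (fun ε ↦ ∫ x, ζ x * (deriv (layerCutoff ε) (s x) * s x)) (𝓝[>] 0) (𝓝 0) := by
  obtain ⟨M, hM⟩ := exists_forall_abs_mul_deriv_layerCutoff_le
  suffices h : Tendsto (fun ε ↦ ∫ x, ζ x * (deriv (layerCutoff ε) (s x) * s x)) (𝓝[>] 0)
      (𝓝 (∫ _ : E, 0)) by simpa using h
  refine tendsto_integral_filter_of_dominated_convergence (fun x ↦ ‖ζ x‖ * M)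
    (eventually_mem_nhdsWithin.mono fun ε hε ↦ ?_) (.of_forall fun ε ↦ ae_of_all _ fun x ↦ ?_)
    ((hζ.integrable_of_hasCompactSupport hζc).norm.mul_const M) (ae_of_all _ fun x ↦ ?_)
  · exact (integrable_mul_of_continuousAt hζ hζc fun x hx ↦
      continuousAt_deriv_comp_mul_of_eventuallyEq_zero contDiff_layerCutoff
        (layerCutoff_eventuallyEq_zero hε) (hs x hx) fun _ ↦ hs x hx).aestronglyMeasurable
  · rw [norm_mul, mul_comm (deriv _ _)]
    exact mul_le_mul_of_nonneg_left (hM ε (s x)) (norm_nonneg _)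
  · simpa [mul_comm] using (tendsto_mul_deriv_layerCutoff (hs0 x)).const_mul (ζ x)

theorem IsHarmonicVectorField.isWeaklyDivergenceFree_of_ne_zero_mem
    (hV : IsHarmonicVectorField V U) (hU : IsOpen U) (hD : IsOpen D) (hVD : ContinuousOn V D)
    (hVU : ∀ x ∈ D, V x ≠ 0 → x ∈ U) : IsWeaklyDivergenceFree V D := by
  intro η hη hηc hηD
  obtain ⟨ζ, hζ, hζc, hζD, hηζ⟩ :=
    exists_contDiff_forall_abs_le (n := 2) hη.continuous hηc hD hηD
  have hVcont : ∀ x ∈ D, ContinuousAt V x := fun x hx ↦ hVD.continuousAt (hD.mem_nhds hx)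
  have hsD : ∀ x ∈ D, ContinuousAt (fun x ↦ ‖V x‖ ^ 2) x := fun x hx ↦ (hVcont x hx).norm.pow 2
  have hlayers := tendsto_integral_mul_deriv_layerCutoff_comp_mul hζ.continuous hζc
    (fun x hx ↦ hsD x (hζD hx)) fun x ↦ sq_nonneg ‖V x‖
  have hcutoff := tendsto_integral_layerCutoff_comp_mul (fun x ↦ sq_nonneg ‖V x‖)
    (integrable_fderiv_apply hη hηc fun x hx ↦ hVcont x (hηD hx))
    (fun x hx ↦ by simp [norm_eq_zero.1 (sq_eq_zero_iff.1 hx)]) fun ε hε ↦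
      (integrable_comp_mul_fderiv_apply hη hηc (contDiff_layerCutoff (n := 1)).continuous
        (layerCutoff_eventuallyEq_zero hε) (fun x hx ↦ hsD x (hηD hx))
        fun x hx _ ↦ hVcont x (hηD hx)).aestronglyMeasurable
  have hle (δ : ℝ) (hδ : 0 < δ) :
      |∫ x, fderiv ℝ η x (V x)| ≤ δ * ∫ x, |Δ ζ x| * ‖V x‖ ^ 2 := by
    have hbound := (hlayers.const_mul δ⁻¹).const_add (δ * ∫ x, |Δ ζ x| * ‖V x‖ ^ 2)
    rw [mul_zero, add_zero] at hbound
    refine le_of_tendsto_of_tendsto hcutoff.abs hbound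
      (eventually_mem_nhdsWithin.mono fun ε hε ↦ ?_)
    exact hV.abs_integral_comp_mul_fderiv_le hU hη hζ hζc hηζ (fun x hx ↦ hVcont x (hζD hx))
      (fun x hx ↦ hVU x (hζD hx)) contDiff_layerCutoff (layerCutoff_eventuallyEq_zero hε)
      (fun _ ↦ layerCutoff_mem_Icc) (fun _ ↦ deriv_layerCutoff_nonneg hε) hδ
  have hzero : Tendsto (fun δ : ℝ ↦ δ * ∫ x, |Δ ζ x| * ‖V x‖ ^ 2) (𝓝[>] 0) (𝓝 0) :=
    ((continuous_mul_const _).tendsto' _ _ (zero_mul _)).mono_left nhdsWithin_le_nhds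
  exact abs_nonpos_iff.1 (ge_of_tendsto hzero (eventually_mem_nhdsWithin.mono hle))

end Removability

section UniqueContinuation

variable {E : Type*} [NormedAddCommGroup E] [InnerProductSpace ℝ E] [FiniteDimensional ℝ E]
  {w : E → ℝ} {U D S Ω : Set E} {x x₀ : E}

theorem analyticOnNhd_of_harmonicOnNhd_of_gradient_ne_zero_mem [MeasurableSpace E] [BorelSpace E]
    (hw : InnerProductSpace.HarmonicOnNhd w U) (hU : IsOpen U) (hD : IsOpen D)
    (hwD : ContDiffOn ℝ 1 w D) (hDU : ∀ x ∈ D, ∇ w x ≠ 0 → x ∈ U) : AnalyticOnNhd ℝ w D := by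
  have hgradient : ContinuousOn (∇ w) D := fun x hx ↦
    (contDiffAt_gradient (n := 1) (m := 0) (hwD.contDiffAt (hD.mem_nhds hx))
      le_rfl).continuousAt.continuousWithinAt
  have hweak : IsWeaklyDivergenceFree (∇ w) D :=
    (isHarmonicVectorField_gradient hw hU).isWeaklyDivergenceFree_of_ne_zero_mem hU hD hgradient
      hDU
  exact (hasMeanValueProperty_of_isWeaklyDivergenceFree_gradient hweak hD hwD).analyticOnNhd hD
    hwD.continuousOn

theorem gradient_eq_zero_of_mem_closure_interior (hw0 : ∀ x ∈ S, w x = 0)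
    (hw : ContDiffAt ℝ 1 w x) (hx : x ∈ closure (interior S)) : ∇ w x = 0 := by
  have hinterior : EqOn (∇ w) 0 (interior S) := fun y hy ↦ by
    have hwy : w =ᶠ[𝓝 y] fun _ ↦ 0 := eventually_of_mem (mem_interior_iff_mem_nhds.1 hy) hw0
    rw [hwy.gradient.self_of_nhds, gradient_fun_const, Pi.zero_apply]
  have hcont : ContinuousAt (∇ w) x :=
    (contDiffAt_gradient (n := 1) (m := 0) hw le_rfl).continuousAt
  have := mem_closure_iff_nhdsWithin_neBot.1 hx
  exact tendsto_nhds_unique (hcont.continuousWithinAt (s := interior S))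
    (tendsto_const_nhds.congr' (hinterior.symm.eventuallyEq_nhdsWithin))

theorem closure_interior_compl_of_interior_closure_eq {X : Type*} [TopologicalSpace X] {Ω : Set X}
    (hΩ : interior (closure Ω) = Ω) : closure (interior Ωᶜ) = Ωᶜ := by
  rw [interior_compl, closure_compl, hΩ]

theorem weak_unique_continuation_general (hΩ : IsPreconnected Ω)
    (hΩreg : interior (closure Ω) = Ω) (hx₀ : x₀ ∈ frontier Ω)
    (hw : InnerProductSpace.HarmonicOnNhd w Ω) (hw0 : ∀ x ∉ Ω, w x = 0)
    (hw1 : ContDiffAt ℝ 1 w x₀) : ∀ x ∈ Ω, w x = 0 := by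
  borelize E
  have hΩopen : IsOpen Ω := hΩreg ▸ isOpen_interior
  have hcompl := closure_interior_compl_of_interior_closure_eq hΩreg
  obtain ⟨r, hr, hball⟩ := eventually_nhds_iff_ball.1 (hw1.eventually (by simp))
  have hD : IsOpen (Ω ∪ ball x₀ r) := hΩopen.union isOpen_ball
  have hwD : ∀ x ∈ Ω ∪ ball x₀ r, ContDiffAt ℝ 1 w x := fun x hx ↦
    hx.elim (fun hx ↦ (hw x hx).1.of_le one_le_two) (hball x)
  have hanalytic : AnalyticOnNhd ℝ w (Ω ∪ ball x₀ r) :=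
    analyticOnNhd_of_harmonicOnNhd_of_gradient_ne_zero_mem hw hΩopen hD
      (fun x hx ↦ (hwD x hx).contDiffWithinAt) fun x hx h ↦ by
        by_contra hxΩ
        exact h (gradient_eq_zero_of_mem_closure_interior (S := Ωᶜ) hw0 (hwD x hx)
          (hcompl.ge hxΩ))
  obtain ⟨y, hy, hyΩ⟩ := mem_closure_iff.1 (frontier_subset_closure hx₀) _ isOpen_ball
    (mem_ball_self hr)
  have hpreconnected : IsPreconnected (Ω ∪ ball x₀ r) :=
    hΩ.union y hyΩ hy (convex_ball x₀ r).isPreconnected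
  have hx₀Ω : x₀ ∈ Ωᶜ := (hΩopen.frontier_eq ▸ hx₀).2
  obtain ⟨z, hz, hzΩ⟩ := mem_closure_iff.1 (hcompl.ge hx₀Ω) _ isOpen_ball (mem_ball_self hr)
  exact fun x hx ↦ hanalytic.eqOn_zero_of_preconnected_of_eventuallyEq_zero hpreconnected
    (Or.inr hz) (eventually_of_mem (mem_interior_iff_mem_nhds.1 hzΩ) hw0) (Or.inl hx)

end UniqueContinuation

theorem interior_closure_setOf_pos {E : Type*} [NormedAddCommGroup E] [NormedSpace ℝ E]
    {φ : E → ℝ} (hφ : Continuous φ) (hφ' : ∀ x, φ x = 0 → fderiv ℝ φ x ≠ 0) :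
    interior (closure {x | 0 < φ x}) = {x | 0 < φ x} := by
  refine Subset.antisymm (fun x hx ↦ ?_) (isOpen_lt continuous_const hφ).subset_interior_closure
  have hnonneg : ∀ᶠ y in 𝓝 x, 0 ≤ φ y :=
    eventually_of_mem (mem_interior_iff_mem_nhds.1 hx) fun y hy ↦
      closure_lt_subset_le continuous_const hφ hy
  refine hnonneg.self_of_nhds.lt_of_ne fun h ↦ hφ' x h.symm ?_
  exact IsLocalMin.fderiv_eq_zero (hnonneg.mono fun y hy ↦ h.symm.trans_le hy)

theorem fderiv_ne_zero_of_one_le_norm_gradient {E : Type*} [NormedAddCommGroup E]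
    [InnerProductSpace ℝ E] [CompleteSpace E] {φ : E → ℝ} {x : E} (h : 1 ≤ ‖∇ φ x‖) :
    fderiv ℝ φ x ≠ 0 := fun h0 ↦ by
  norm_num [gradient, h0] at h

theorem laplacian_eq_laplacian {n : ℕ} (f : EuclideanSpace ℝ (Fin n) → ℝ) :
    laplacian f = Δ f := by
  rw [InnerProductSpace.laplacian_eq_iteratedFDeriv_orthonormalBasis f
    (EuclideanSpace.basisFun (Fin n) ℝ)]
  ext x
  simp [laplacian]

theorem harmonicOnNhd_of_laplacian_eq_zero {n : ℕ} {u : EuclideanSpace ℝ (Fin n) → ℝ}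
    {Ω : Set (EuclideanSpace ℝ (Fin n))} (hΩ : IsOpen Ω) (hu : ContDiffOn ℝ 2 u Ω)
    (hharm : ∀ x ∈ Ω, laplacian u x = 0) : InnerProductSpace.HarmonicOnNhd u Ω := fun _ hx ↦
  ⟨hu.contDiffAt (hΩ.mem_nhds hx), eventually_of_mem (hΩ.mem_nhds hx) fun y hy ↦
    (congr_fun (laplacian_eq_laplacian u) y).symm.trans (hharm y hy)⟩

/-- Weak unique continuation principle for Steklov eigenfunctions
(Theorem 3.3, reformulated without Sobolev spaces). -/
theorem weak_unique_continuation
    {n : ℕ} (hn : 2 ≤ n)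
    (Ω : Set (EuclideanSpace ℝ (Fin n)))
    (hΩopen : IsOpen Ω) (hΩconn : IsConnected Ω)
    (hΩbdd : Bornology.IsBounded Ω)
    (φ : EuclideanSpace ℝ (Fin n) → ℝ)
    (hφ : ContDiff ℝ 2 φ)
    (hΩφ : Ω = {x | 0 < φ x})
    (hφgrad : ∀ x, φ x = 0 → 1 ≤ ‖gradient φ x‖)
    (B : Set (EuclideanSpace ℝ (Fin n)))
    (hB : IsOpen B) (hBfr : (B ∩ frontier Ω).Nonempty)
    (u : EuclideanSpace ℝ (Fin n) → ℝ)
    (hu : ContDiffOn ℝ 2 u Ω)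
    (hharm : ∀ x ∈ Ω, laplacian u x = 0)
    (w : EuclideanSpace ℝ (Fin n) → ℝ)
    (hw : ∀ x ∈ Ω, w x = u x) (hw0 : ∀ x ∉ Ω, w x = 0)
    (hwC1 : ContDiffOn ℝ 1 w (Ω ∪ B)) :
    ∀ x ∈ Ω, u x = 0 := by
  obtain ⟨x₀, hx₀B, hx₀⟩ := hBfr
  have hΩreg : interior (closure Ω) = Ω := by
    rw [hΩφ]
    exact interior_closure_setOf_pos hφ.continuous fun x hx ↦
      fderiv_ne_zero_of_one_le_norm_gradient (hφgrad x hx)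
  have hharm_w : InnerProductSpace.HarmonicOnNhd w Ω := fun x hx ↦
    (InnerProductSpace.harmonicAt_congr_nhds (eventually_of_mem (hΩopen.mem_nhds hx) hw)).2
      (harmonicOnNhd_of_laplacian_eq_zero hΩopen hu hharm x hx)
  have hw_zero : ∀ x ∈ Ω, w x = 0 := weak_unique_continuation_general hΩconn.isPreconnected hΩreg
    hx₀ hharm_w hw0 (hwC1.contDiffAt ((hΩopen.union hB).mem_nhds (Or.inr hx₀B)))
  exact fun x hx ↦ (hw x hx).symm.trans (hw_zero x hx)
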